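/- arXiv:1604.00416 — 2 statements merged into one kernel-verified Lean document; each statement's English description precedes it below -/
import Mathlib

section
/- Coincidence of screw functions of a canonical system up to a linear term (Statement 4.1°): Let H be a Hamiltonian on [0,ℓ) as in the context, let 0 < l < ℓ and suppose a(l) := ∫₀^l √(det H(x)) dx > 0. If τ₁ and τ₂ are spectral measures of the canonical system on [0,l] and g_{τ₁}, g_{τ₂} are corresponding screw (transfer) functions, then there exists β ∈ ℝ such that g_{τ₁}(t) − g_{τ₂}(t) = iβt for all t ∈ [0,2a(l)]. -/
open MeasureTheory Set

/-- The symplectic matrix `J = [[0,-1],[1,0]]` (over `ℂ`). -/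
def Jmat : Matrix (Fin 2) (Fin 2) ℂ := !![0, -1; 1, 0]

/-- Membership of `x` in the interval `[0, ℓ)`, where `0 < ℓ ≤ ∞`. -/
def InDom (ℓ : ENNReal) (x : ℝ) : Prop := 0 ≤ x ∧ ENNReal.ofReal x < ℓ

/-- A Nevanlinna function: holomorphic on `ℂ∖ℝ`, symmetric w.r.t. conjugation,
with nonnegative imaginary part on the upper half-plane. -/
def IsNevanlinna (γ : ℂ → ℂ) : Prop :=
  DifferentiableOn ℂ γ {z : ℂ | z.im ≠ 0} ∧
  (∀ z : ℂ, z.im ≠ 0 → γ (starRingEnd ℂ z) = starRingEnd ℂ (γ z)) ∧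
  (∀ z : ℂ, 0 < z.im → 0 ≤ (γ z).im)

/-- The Herglotz (Nevanlinna) integral representation
`α + βz + ∫_ℝ (1/(λ-z) - λ/(1+λ²)) dτ(λ)`. -/
noncomputable def herglotzFn (τ : Measure ℝ) (α β : ℝ) (z : ℂ) : ℂ :=
  (α : ℂ) + (β : ℂ) * z +
    ∫ lam : ℝ, (1 / ((lam : ℂ) - z) - (lam : ℂ) / (1 + (lam : ℂ) ^ 2)) ∂τ

/-- `W(·;z)` is the (continuous, matrix-valued) solution on `[0,l]` of
`W(x;z) = I₂ - z ∫₀ˣ W(s;z) H(s) J ds`, i.e. `W'(x;z)J = zW(x;z)H(x)`, `W(0;z) = I₂`. -/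
def IsFundamentalSolution (l : ℝ) (H : ℝ → Matrix (Fin 2) (Fin 2) ℝ)
    (W : ℂ → ℝ → Matrix (Fin 2) (Fin 2) ℂ) : Prop :=
  (∀ (z : ℂ) (i j : Fin 2), ContinuousOn (fun x => W z x i j) (Icc 0 l)) ∧
  ∀ (z : ℂ), ∀ x ∈ Icc (0:ℝ) l, ∀ i j : Fin 2,
    W z x i j = (1 : Matrix (Fin 2) (Fin 2) ℂ) i j -
      z * ∫ s in (0:ℝ)..x, (W z s * (H s).map (fun r => (r : ℂ)) * Jmat) i j

/-- `τ` is a spectral measure of the canonical system on `[0,l]` with fundamental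
solution values `Wl z = W(l;z)`: it satisfies `∫ dτ/(1+λ²) < ∞` and for some
Nevanlinna parameter `γ` (or `γ ≡ ∞`) the Weyl–Titchmarsh fraction admits the
Herglotz representation with measure `τ`. -/
def IsCanSpectralMeasure (Wl : ℂ → Matrix (Fin 2) (Fin 2) ℂ) (τ : Measure ℝ) : Prop :=
  (∫⁻ lam : ℝ, ENNReal.ofReal (1 / (1 + lam ^ 2)) ∂τ < ⊤) ∧
  ((∃ γ : ℂ → ℂ, IsNevanlinna γ ∧ ∃ α β : ℝ, 0 ≤ β ∧ ∀ z : ℂ, z.im ≠ 0 →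
      (Wl z 0 0 * γ z + Wl z 0 1) / (Wl z 1 0 * γ z + Wl z 1 1) = herglotzFn τ α β z) ∨
   (∃ α β : ℝ, 0 ≤ β ∧ ∀ z : ℂ, z.im ≠ 0 →
      Wl z 0 0 / Wl z 1 0 = herglotzFn τ α β z))

/-- The kernel `e(λ,t) = (e^{iλt} - 1 - iλt/(1+λ²))/λ²` for `λ ≠ 0`,
and `e(0,t) = -t²/2`. -/
noncomputable def eker (lam t : ℝ) : ℂ :=
  if lam = 0 then -(t ^ 2) / 2
  else (Complex.exp (Complex.I * lam * t) - 1 -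
          Complex.I * lam * t / (1 + (lam : ℂ) ^ 2)) / (lam : ℂ) ^ 2

/-!
Let `u`, `v` be the rows of `W(·; z)` with `Im z > 0`, so that their Wronskian is `1`. The energy
identity expresses `Im z ∫ u H u*` by a boundary term, the flux, and has two consequences. First,
all Weyl–Titchmarsh fractions lie in one disc of radius `1 / (2 flux v(l))`. Second, a point `q` of
that disc satisfies `Im z ∫₀ˣ (u - q v) H (u - q v)* ≤ Im q`; the Cauchy–Schwarz inequality
`a(x)² ≤ ∫₀ˣ (u - q v) H (u - q v)* · ∫₀ˣ v H v*` then bounds `flux v(x)` from below, and the flux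
grows at least by the factor `exp (2 (a(l) - a(x)) Im z)` from `x` to `l`. Choosing `x` with `a(x)`
small, the Herglotz functions `Q₁`, `Q₂` of two spectral measures satisfy
`Q₁(iy) - Q₂(iy) = O(exp (-T y))` for every `T < 2 a(l)`.

Up to an affine term, the screw function of `τ` has Laplace transform `-(i / y²) Q(-iy)`. The
difference `F` of two screw functions, so corrected, therefore has an exponentially small Laplace
transform. Multiplied by `exp (T z)`, the Laplace transform of the restriction of `F` to `[0, T]` is
a bounded entire function (Phragmén–Lindelöf), hence constant (Liouville), hence `0`, and Fourier
inversion gives `F = 0` on `[0, T]`. Evaluation at `t = 0` removes the constant in the affine term.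
-/

section Primitive

theorem absolutelyContinuousOnInterval_comp_of_lipschitzOnWith {X Y : Type*}
    [PseudoMetricSpace X] [PseudoMetricSpace Y] {φ : X → Y} {s : Set X} {K : NNReal}
    (hφ : LipschitzOnWith K φ s) {U : ℝ → X} {a b : ℝ}
    (hU : AbsolutelyContinuousOnInterval U a b) (hs : MapsTo U (uIcc a b) s) :
    AbsolutelyContinuousOnInterval (φ ∘ U) a b := by
  rw [absolutelyContinuousOnInterval_iff] at hU ⊢
  intro ε hε
  obtain ⟨δ, hδ, small⟩ := hU (ε / (K + 1)) (by positivity)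
  refine ⟨δ, hδ, fun I hI hlen ↦ ?_⟩
  calc ∑ i ∈ Finset.range I.1, dist (φ (U (I.2 i).1)) (φ (U (I.2 i).2))
      ≤ ∑ i ∈ Finset.range I.1, K * dist (U (I.2 i).1) (U (I.2 i).2) :=
        Finset.sum_le_sum fun i hi ↦ hφ.dist_le_mul _ (hs (hI.1 i hi).1) _ (hs (hI.1 i hi).2)
    _ = K * ∑ i ∈ Finset.range I.1, dist (U (I.2 i).1) (U (I.2 i).2) := by rw [Finset.mul_sum]
    _ ≤ (K + 1) * ∑ i ∈ Finset.range I.1, dist (U (I.2 i).1) (U (I.2 i).2) := by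
        gcongr; linarith
    _ < ε := by
        rw [← lt_div_iff₀' (by positivity)]
        exact small I hI hlen

variable {E F : Type*} [NormedAddCommGroup E] [NormedSpace ℝ E] [NormedAddCommGroup F]
  [NormedSpace ℝ F] {a b : ℝ}

/-- `U` is a primitive of `f` on the interval between `a` and `b` in the sense of Lebesgue: `f` is
integrable there and `U x = U a + ∫ₐˣ f`. This is the integrated form of `U' = f`. -/
structure IsPrimitiveOn (U f : ℝ → E) (a b : ℝ) : Prop where
  intervalIntegrable : IntervalIntegrable f volume a b
  eq_add_integral : ∀ x ∈ uIcc a b, U x = U a + ∫ s in a..x, f s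

theorem absolutelyContinuousOnInterval_integral {f : ℝ → E} (hf : IntervalIntegrable f volume a b) :
    AbsolutelyContinuousOnInterval (fun x ↦ ∫ s in a..x, f s) a b := by
  have norm_integral_ac := hf.norm.absolutelyContinuousOnInterval_intervalIntegral left_mem_uIcc
  rw [absolutelyContinuousOnInterval_iff] at norm_integral_ac ⊢
  intro ε hε
  obtain ⟨δ, hδ, small⟩ := norm_integral_ac ε hε
  refine ⟨δ, hδ, fun I hI hlen ↦ (Finset.sum_le_sum fun i hi ↦ ?_).trans_lt (small I hI hlen)⟩
  have integrable_to {x : ℝ} (hx : x ∈ uIcc a b) : IntervalIntegrable f volume a x :=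
    hf.mono_set (uIcc_subset_uIcc left_mem_uIcc hx)
  obtain ⟨h₁, h₂⟩ := hI.1 i hi
  rw [dist_eq_norm, dist_eq_norm,
    intervalIntegral.integral_interval_sub_left (integrable_to h₁) (integrable_to h₂),
    intervalIntegral.integral_interval_sub_left (integrable_to h₁).norm (integrable_to h₂).norm]
  exact intervalIntegral.norm_integral_le_abs_integral_norm

namespace IsPrimitiveOn

variable {U V f g : ℝ → E}

theorem mono (hU : IsPrimitiveOn U f a b) {c : ℝ} (hc : c ∈ uIcc a b) : IsPrimitiveOn U f a c where
  intervalIntegrable :=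
    hU.intervalIntegrable.mono_set (uIcc_subset_uIcc left_mem_uIcc hc)
  eq_add_integral x hx := hU.eq_add_integral x (uIcc_subset_uIcc left_mem_uIcc hc hx)

theorem absolutelyContinuousOnInterval (hU : IsPrimitiveOn U f a b) :
    AbsolutelyContinuousOnInterval U a b := by
  have ac : AbsolutelyContinuousOnInterval (fun x ↦ U a + ∫ s in a..x, f s) a b :=
    (contDiffOn_const (c := U a)).absolutelyContinuousOnInterval.add
      (absolutelyContinuousOnInterval_integral hU.intervalIntegrable)
  rw [absolutelyContinuousOnInterval_iff] at ac ⊢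
  intro ε hε
  obtain ⟨δ, hδ, small⟩ := ac ε hε
  refine ⟨δ, hδ, fun I hI hlen ↦ ?_⟩
  convert small I hI hlen using 3 with i hi
  · exact hU.eq_add_integral _ (hI.1 i hi).1
  · exact hU.eq_add_integral _ (hI.1 i hi).2

theorem continuousOn (hU : IsPrimitiveOn U f a b) : ContinuousOn U (uIcc a b) :=
  hU.absolutelyContinuousOnInterval.continuousOn

theorem ae_hasDerivAt [CompleteSpace E] (hU : IsPrimitiveOn U f a b) :
    ∀ᵐ x, x ∈ uIcc a b → HasDerivAt U (f x) x := by
  have ae_ne (c : ℝ) : ∀ᵐ x, x ≠ c := by simp [ae_iff, measure_singleton]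
  filter_upwards [hU.intervalIntegrable.ae_hasDerivAt_integral, ae_ne a, ae_ne b]
    with x hasDerivAt_integral hxa hxb hx
  have interior : uIcc a b ∈ nhds x :=
    Icc_mem_nhds (hx.1.lt_of_ne (by grind)) (hx.2.lt_of_ne (by grind))
  exact ((hasDerivAt_integral hx a left_mem_uIcc).const_add (U a)).congr_of_eventuallyEq
    (Filter.eventuallyEq_of_mem interior hU.eq_add_integral)

theorem of_ae_hasDerivAt [CompleteSpace E] (hU : AbsolutelyContinuousOnInterval U a b)
    (hf : IntervalIntegrable f volume a b)
    (hderiv : ∀ᵐ x, x ∈ uIcc a b → HasDerivAt U (f x) x) : IsPrimitiveOn U f a b where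
  intervalIntegrable := hf
  eq_add_integral x hx := by
    have deriv_sub_integral : ∀ᵐ x, x ∈ uIcc a b →
        HasDerivAt (U - fun x ↦ ∫ s in a..x, f s) 0 x := by
      filter_upwards [hderiv, hf.ae_hasDerivAt_integral] with x h₁ h₂ hx
      simpa using (h₁ hx).sub (h₂ hx a left_mem_uIcc)
    have sub_integral_ac := hU.sub (absolutelyContinuousOnInterval_integral hf)
    obtain ⟨c, hc⟩ := sub_integral_ac.const_of_ae_hasDerivAt_zero deriv_sub_integral
    have at_left : U a = c := by simpa using hc a left_mem_uIcc
    rw [at_left, ← hc x hx]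
    simp

theorem sub [CompleteSpace E] (hU : IsPrimitiveOn U f a b) (hV : IsPrimitiveOn V g a b) :
    IsPrimitiveOn (U - V) (f - g) a b :=
  of_ae_hasDerivAt (hU.absolutelyContinuousOnInterval.sub hV.absolutelyContinuousOnInterval)
    (hU.intervalIntegrable.sub hV.intervalIntegrable) <| by
      filter_upwards [hU.ae_hasDerivAt, hV.ae_hasDerivAt] with x h₁ h₂ hx
      exact (h₁ hx).sub (h₂ hx)

theorem mul {A : Type*} [NormedDivisionRing A] [NormedAlgebra ℝ A] [CompleteSpace A]
    {U V f g : ℝ → A}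
    (hU : IsPrimitiveOn U f a b) (hV : IsPrimitiveOn V g a b) :
    IsPrimitiveOn (U * V) (f * V + U * g) a b :=
  of_ae_hasDerivAt (hU.absolutelyContinuousOnInterval.smul hV.absolutelyContinuousOnInterval)
    ((hU.intervalIntegrable.mul_continuousOn hV.continuousOn).add
      (hV.intervalIntegrable.continuousOn_mul hU.continuousOn)) <| by
      filter_upwards [hU.ae_hasDerivAt, hV.ae_hasDerivAt] with x h₁ h₂ hx
      exact (h₁ hx).mul (h₂ hx)

theorem comp_of_contDiff {φ : ℝ → ℝ} (hφ : ContDiff ℝ 1 φ) {U f : ℝ → ℝ}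
    (hU : IsPrimitiveOn U f a b) :
    IsPrimitiveOn (φ ∘ U) (fun x ↦ deriv φ (U x) * f x) a b := by
  obtain ⟨K, hK⟩ := (hφ.locallyLipschitz.locallyLipschitzOn
    (s := U '' uIcc a b)).exists_lipschitzOnWith_of_compact
      (isCompact_uIcc.image_of_continuousOn hU.continuousOn)
  refine of_ae_hasDerivAt (absolutelyContinuousOnInterval_comp_of_lipschitzOnWith hK
    hU.absolutelyContinuousOnInterval (mapsTo_image U _)) ?_ ?_
  · exact hU.intervalIntegrable.continuousOn_mul
      ((hφ.continuous_deriv le_rfl).comp_continuousOn hU.continuousOn)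
  · filter_upwards [hU.ae_hasDerivAt] with x h hx
    exact ((hφ.differentiable one_ne_zero).differentiableAt.hasDerivAt).comp x (h hx)

theorem continuousLinearMap_comp [CompleteSpace E] [CompleteSpace F] (L : E →L[ℝ] F)
    (hU : IsPrimitiveOn U f a b) : IsPrimitiveOn (L ∘ U) (L ∘ f) a b where
  intervalIntegrable := ⟨L.integrable_comp hU.1.1, L.integrable_comp hU.1.2⟩
  eq_add_integral x hx := by
    simp only [Function.comp_apply, hU.eq_add_integral x hx, map_add,
      L.intervalIntegral_comp_comm (hU.mono hx).intervalIntegrable]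

theorem pi {ι : Type*} [Fintype ι] {G : ι → Type*} [∀ i, NormedAddCommGroup (G i)]
    [∀ i, NormedSpace ℝ (G i)] [∀ i, CompleteSpace (G i)] {U f : ℝ → ∀ i, G i}
    (h : ∀ i, IsPrimitiveOn (fun x ↦ U x i) (fun x ↦ f x i) a b) : IsPrimitiveOn U f a b where
  intervalIntegrable :=
    ⟨Integrable.of_eval fun i ↦ (h i).intervalIntegrable.1,
      Integrable.of_eval fun i ↦ (h i).intervalIntegrable.2⟩
  eq_add_integral x hx := by
    ext i
    have hi (i : ι) := ((h i).mono hx).intervalIntegrable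
    rw [(h i).eq_add_integral x hx, Pi.add_apply, intervalIntegral, intervalIntegral, Pi.sub_apply,
      eval_integral fun i ↦ (hi i).1, eval_integral fun i ↦ (hi i).2]

theorem congr_ae [CompleteSpace E] (hU : IsPrimitiveOn U f a b)
    (hfg : ∀ᵐ x ∂volume.restrict (uIcc a b), f x = g x) : IsPrimitiveOn U g a b := by
  refine of_ae_hasDerivAt hU.absolutelyContinuousOnInterval
    (hU.intervalIntegrable.congr_ae
      (ae_restrict_of_ae_restrict_of_subset uIoc_subset_uIcc hfg)) ?_
  filter_upwards [hU.ae_hasDerivAt, (ae_restrict_iff' measurableSet_uIcc).1 hfg] with x h hx hxab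
  exact hx hxab ▸ h hxab

theorem monotoneOn {U f : ℝ → ℝ} (hU : IsPrimitiveOn U f a b) (hab : a ≤ b)
    (hf : ∀ᵐ x ∂volume.restrict (Icc a b), 0 ≤ f x) : MonotoneOn U (Icc a b) := by
  intro x hx y hy hxy
  rw [← uIcc_of_le hab] at hx hy
  rw [← sub_nonneg, hU.eq_add_integral x hx, hU.eq_add_integral y hy, add_sub_add_left_eq_sub,
    intervalIntegral.integral_interval_sub_left (hU.mono hy).1 (hU.mono hx).1]
  rw [uIcc_of_le hab] at hx hy
  exact intervalIntegral.integral_nonneg_of_ae_restrict hxy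
    (ae_restrict_of_ae_restrict_of_subset (Icc_subset_Icc hx.1 hy.2) hf)

theorem monotoneOn_mul_exp_neg {U A f c : ℝ → ℝ} (hU : IsPrimitiveOn U f a b)
    (hA : IsPrimitiveOn A c a b) (hab : a ≤ b)
    (hf : ∀ᵐ x ∂volume.restrict (Icc a b), c x * U x ≤ f x) :
    MonotoneOn (fun x ↦ U x * Real.exp (-A x)) (Icc a b) := by
  have hexp : ContDiff ℝ 1 fun r : ℝ ↦ Real.exp (-r) := Real.contDiff_exp.comp contDiff_neg
  refine (hU.mul (hA.comp_of_contDiff hexp)).monotoneOn hab ?_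
  filter_upwards [hf] with x hx
  have deriv_exp_neg : deriv (fun r : ℝ ↦ Real.exp (-r)) (A x) = -Real.exp (-A x) := by
    simp [deriv_comp_neg Real.exp]
  calc 0 ≤ (f x - c x * U x) * Real.exp (-A x) :=
        mul_nonneg (sub_nonneg.2 hx) (Real.exp_pos _).le
    _ = _ := by
        simp only [Pi.add_apply, Pi.mul_apply, Function.comp_apply, deriv_exp_neg]
        ring

end IsPrimitiveOn
end Primitive

theorem sq_integral_le_integral_mul_integral {α : Type*} [MeasurableSpace α] {μ : Measure α}
    {f g s : α → ℝ} (hf : Integrable f μ) (hg : Integrable g μ) (hs : Integrable s μ)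
    (hf₀ : 0 ≤ᵐ[μ] f) (hg₀ : 0 ≤ᵐ[μ] g) (hsfg : ∀ᵐ x ∂μ, s x ^ 2 ≤ f x * g x) :
    (∫ x, s x ∂μ) ^ 2 ≤ (∫ x, f x ∂μ) * ∫ x, g x ∂μ := by
  have quadratic_nonneg (t : ℝ) :
      0 ≤ (∫ x, f x ∂μ) * (t * t) + -(2 * ∫ x, s x ∂μ) * t + ∫ x, g x ∂μ := by
    have expand : ∫ x, (t * t * f x + -(2 * t) * s x + g x) ∂μ =
        (∫ x, f x ∂μ) * (t * t) + -(2 * ∫ x, s x ∂μ) * t + ∫ x, g x ∂μ := by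
      rw [integral_add (f := fun x ↦ t * t * f x + -(2 * t) * s x)
          ((hf.const_mul _).add (hs.const_mul _)) hg,
        integral_add (hf.const_mul _) (hs.const_mul _), integral_const_mul, integral_const_mul]
      ring
    rw [← expand]
    refine integral_nonneg_of_ae ?_
    filter_upwards [hf₀, hg₀, hsfg] with x (hfx : 0 ≤ f x) (hgx : 0 ≤ g x) hx
    have sq_le : (2 * t * s x) ^ 2 ≤ (t * t * f x + g x) ^ 2 := by
      nlinarith [sq_nonneg (t * t * f x - g x), mul_self_nonneg t]
    have := abs_le_of_sq_le_sq' sq_le (add_nonneg (mul_nonneg (mul_self_nonneg t) hfx) hgx)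
    simp only [Pi.zero_apply]
    linarith [this.2]
  have discrim_nonpos := discrim_le_zero quadratic_nonneg
  rw [discrim] at discrim_nonpos
  linarith

namespace CanonicalSystem

open Matrix ComplexConjugate

variable {u v : Fin 2 → ℂ} {M : Matrix (Fin 2) (Fin 2) ℝ} {H : ℝ → Matrix (Fin 2) (Fin 2) ℝ}
  {l : ℝ} {z : ℂ}

/-- The Wronskian `u₀v₁ - u₁v₀` of two values of row solutions. -/
def wronskian (u v : Fin 2 → ℂ) : ℂ := u 0 * v 1 - u 1 * v 0

/-- The flux `Im (u₁ū₀)` of a value of a row solution. It is `(2i)⁻¹` times the Wronskian of `ū` and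
`u`, and it is the boundary term in the energy identity. -/
def flux (u : Fin 2 → ℂ) : ℝ := (u 1 * conj (u 0)).im

/-- The energy density `u M u*` of the row vector `u` with respect to a real symmetric `M`. -/
def energyDensity (M : Matrix (Fin 2) (Fin 2) ℝ) (u : Fin 2 → ℂ) : ℝ :=
  (u ⬝ᵥ M.map (fun r ↦ (r : ℂ)) *ᵥ star u).re

theorem normSq_wronskian_star_right (u : Fin 2 → ℂ) :
    Complex.normSq (wronskian u (star u)) = (2 * |flux u|) ^ 2 := by
  rw [mul_pow, sq_abs]
  simp only [wronskian, Pi.star_apply, RCLike.star_def, Complex.normSq_apply, Complex.sub_re,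
    Complex.mul_re, Complex.conj_re, Complex.conj_im, mul_neg, sub_neg_eq_add, Complex.sub_im,
    Complex.mul_im, flux]
  ring

theorem energyDensity_eq_re_add_im (M : Matrix (Fin 2) (Fin 2) ℝ) (u : Fin 2 → ℂ) :
    energyDensity M u = (fun i ↦ (u i).re) ⬝ᵥ M *ᵥ (fun i ↦ (u i).re) +
      (fun i ↦ (u i).im) ⬝ᵥ M *ᵥ (fun i ↦ (u i).im) := by
  simp only [energyDensity, dotProduct, mulVec, map_apply, Pi.star_apply, RCLike.star_def,
    Fin.sum_univ_two, Complex.add_re, Complex.mul_re, Complex.ofReal_re, Complex.conj_re,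
    Complex.ofReal_im, Complex.conj_im, mul_neg, zero_mul, neg_zero, sub_zero, Complex.add_im,
    Complex.mul_im, add_zero]
  ring

theorem energyDensity_nonneg (hM : M.PosSemidef) (u : Fin 2 → ℂ) : 0 ≤ energyDensity M u := by
  rw [energyDensity_eq_re_add_im]
  exact add_nonneg (hM.dotProduct_mulVec_nonneg _) (hM.dotProduct_mulVec_nonneg _)

theorem energyDensity_star (M : Matrix (Fin 2) (Fin 2) ℝ) (u : Fin 2 → ℂ) :
    energyDensity M (star u) = energyDensity M u := by
  simp only [energyDensity_eq_re_add_im, dotProduct, Pi.star_apply, RCLike.star_def,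
    Complex.conj_re, mulVec, Fin.sum_univ_two, Complex.conj_im, mul_neg, Finset.sum_neg_distrib,
    neg_add_rev, neg_mul, add_right_inj]
  ring

theorem det_mul_normSq_wronskian_le (hM : M.IsSymm) (u v : Fin 2 → ℂ) :
    M.det * Complex.normSq (wronskian u v) ≤ energyDensity M u * energyDensity M v := by
  have gram : energyDensity M u * energyDensity M v = M.det * Complex.normSq (wronskian u v) +
      Complex.normSq (u ⬝ᵥ M.map (fun r ↦ (r : ℂ)) *ᵥ star v) := by
    simp only [energyDensity, dotProduct, mulVec, map_apply, Pi.star_apply, RCLike.star_def,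
      Fin.sum_univ_two, hM.apply 0 1, Complex.add_re, Complex.mul_re, Complex.ofReal_re,
      Complex.conj_re, Complex.ofReal_im, Complex.conj_im, mul_neg, zero_mul, neg_zero, sub_zero,
      Complex.add_im, Complex.mul_im, add_zero, det_fin_two, wronskian, Complex.normSq_apply,
      Complex.sub_re, Complex.sub_im]
    ring
  rw [gram]
  exact le_add_of_nonneg_right (Complex.normSq_nonneg _)

theorem two_mul_sqrt_det_mul_abs_flux_le (hM : M.PosSemidef) (u : Fin 2 → ℂ) :
    2 * √M.det * |flux u| ≤ energyDensity M u := by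
  refine le_of_sq_le_sq ?_ (energyDensity_nonneg hM u)
  calc (2 * √M.det * |flux u|) ^ 2 = M.det * Complex.normSq (wronskian u (star u)) := by
        rw [normSq_wronskian_star_right, mul_pow, mul_pow, mul_pow, Real.sq_sqrt hM.det_nonneg]
        ring
    _ ≤ energyDensity M u ^ 2 := by
        rw [sq]
        simpa only [energyDensity_star] using
          det_mul_normSq_wronskian_le (isHermitian_iff_isSymm.1 hM.isHermitian) u (star u)

theorem sqrt_det_le_trace (hM : M.PosSemidef) : √M.det ≤ M.trace := by
  have := hM.diag_nonneg (i := 0)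
  have := hM.diag_nonneg (i := 1)
  rw [Real.sqrt_le_left hM.trace_nonneg, det_fin_two, trace_fin_two,
    (isHermitian_iff_isSymm.1 hM.isHermitian).apply 0 1]
  nlinarith [sq_nonneg (M 0 1), sq_nonneg (M 0 0), sq_nonneg (M 1 1)]

theorem abs_apply_le_trace (hM : M.PosSemidef) (i j : Fin 2) : |M i j| ≤ M.trace := by
  have diag_zero := hM.diag_nonneg (i := 0)
  have diag_one := hM.diag_nonneg (i := 1)
  have det_nonneg := hM.det_nonneg
  have symm := (isHermitian_iff_isSymm.1 hM.isHermitian).apply 0 1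
  rw [det_fin_two, symm] at det_nonneg
  have off_diag : |M 0 1| ≤ M.trace := abs_le_of_sq_le_sq
    (by rw [trace_fin_two]; nlinarith) hM.trace_nonneg
  rw [trace_fin_two] at off_diag ⊢
  fin_cases i <;> fin_cases j <;> simp [abs_of_nonneg, *]

/-- A Hamiltonian on `[0, l]`: integrable entries and positive semidefinite values. Trace-normed
Hamiltonians are covered by `IsHamiltonian.of_trace_eq_one`. -/
structure IsHamiltonian (H : ℝ → Matrix (Fin 2) (Fin 2) ℝ) (l : ℝ) : Prop where
  nonneg : 0 ≤ l
  intervalIntegrable : ∀ i j, IntervalIntegrable (fun x ↦ H x i j) volume 0 l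
  posSemidef : ∀ᵐ x ∂volume.restrict (Icc 0 l), (H x).PosSemidef

/-- `u` is a row solution of `u'J = zuH` on `[0, l]`, written as `u' = -zuHJ` in integrated form. -/
def IsRowSolution (H : ℝ → Matrix (Fin 2) (Fin 2) ℝ) (l : ℝ) (z : ℂ) (u : ℝ → Fin 2 → ℂ) : Prop :=
  IsPrimitiveOn u (fun s ↦ -z • (u s ᵥ* ((H s).map (fun r ↦ (r : ℂ)) * Jmat))) 0 l

/-- The function `a(x) = ∫₀ˣ √(det H)`; its value at `l` is the exponential type of the monodromy
matrix. -/
noncomputable def exponentialType (H : ℝ → Matrix (Fin 2) (Fin 2) ℝ) (x : ℝ) : ℝ :=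
  ∫ s in (0 : ℝ)..x, √(H s).det

namespace IsHamiltonian

variable {c : ℝ}

theorem mono (hH : IsHamiltonian H l) (hc : c ∈ Icc 0 l) : IsHamiltonian H c where
  nonneg := hc.1
  intervalIntegrable i j := (hH.intervalIntegrable i j).mono_set
    (uIcc_subset_uIcc left_mem_uIcc (uIcc_of_le hH.nonneg ▸ hc))
  posSemidef := ae_restrict_of_ae_restrict_of_subset (Icc_subset_Icc_right hc.2) hH.posSemidef

theorem of_trace_eq_one (hl : 0 ≤ l)
    (hmeas : ∀ i j, AEStronglyMeasurable (fun x ↦ H x i j) (volume.restrict (Icc 0 l)))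
    (hpsd : ∀ᵐ x ∂volume.restrict (Icc 0 l), (H x).PosSemidef)
    (htr : ∀ᵐ x ∂volume.restrict (Icc 0 l), (H x).trace = 1) : IsHamiltonian H l where
  nonneg := hl
  intervalIntegrable i j := by
    rw [intervalIntegrable_iff_integrableOn_Icc_of_le hl]
    refine Integrable.of_bound (hmeas i j) 1 ?_
    filter_upwards [hpsd, htr] with x hx hxtr using hxtr ▸ abs_apply_le_trace hx i j
  posSemidef := hpsd

theorem intervalIntegrable_sqrt_det (hH : IsHamiltonian H l) :
    IntervalIntegrable (fun x ↦ √(H x).det) volume 0 l := by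
  have integrable (i j) : Integrable (fun x ↦ H x i j) (volume.restrict (Ioc 0 l)) :=
    (intervalIntegrable_iff_integrableOn_Ioc_of_le hH.nonneg).1 (hH.intervalIntegrable i j)
  have aesm_det : AEStronglyMeasurable (fun x ↦ (H x).det) (volume.restrict (Ioc 0 l)) := by
    simp only [det_fin_two]
    exact ((integrable 0 0).1.mul (integrable 1 1).1).sub
      ((integrable 0 1).1.mul (integrable 1 0).1)
  rw [intervalIntegrable_iff_integrableOn_Ioc_of_le hH.nonneg]
  refine ((integrable 0 0).add (integrable 1 1)).mono'
    (Real.continuous_sqrt.comp_aestronglyMeasurable aesm_det) ?_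
  filter_upwards [ae_restrict_of_ae_restrict_of_subset Ioc_subset_Icc_self hH.posSemidef] with x hx
  rw [Real.norm_of_nonneg (Real.sqrt_nonneg _)]
  exact (sqrt_det_le_trace hx).trans_eq (trace_fin_two _)

theorem isPrimitiveOn_exponentialType (hH : IsHamiltonian H l) :
    IsPrimitiveOn (exponentialType H) (fun x ↦ √(H x).det) 0 l where
  intervalIntegrable := hH.intervalIntegrable_sqrt_det
  eq_add_integral x _ := by simp [exponentialType]

theorem intervalIntegrable_dotProduct_mulVec (hH : IsHamiltonian H l) {u v : ℝ → Fin 2 → ℂ}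
    (hu : ContinuousOn u (Icc 0 l)) (hv : ContinuousOn v (Icc 0 l)) :
    IntervalIntegrable (fun x ↦ u x ⬝ᵥ (H x).map (fun r ↦ (r : ℂ)) *ᵥ v x) volume 0 l := by
  rw [← uIcc_of_le hH.nonneg] at hu hv
  have integrable_entry (i j) : IntervalIntegrable (fun x ↦ (H x i j : ℂ)) volume 0 l :=
    ⟨(hH.intervalIntegrable i j).1.ofReal, (hH.intervalIntegrable i j).2.ofReal⟩
  have integrable_mulVec (i) : IntervalIntegrable
      (fun x ↦ ((H x).map (fun r ↦ (r : ℂ)) *ᵥ v x) i) volume 0 l := by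
    simpa only [mulVec, dotProduct, Fin.sum_univ_two] using!
      ((integrable_entry i 0).mul_continuousOn (continuousOn_pi.1 hv 0)).add
        ((integrable_entry i 1).mul_continuousOn (continuousOn_pi.1 hv 1))
  simpa only [dotProduct, Fin.sum_univ_two] using!
    ((integrable_mulVec 0).continuousOn_mul (continuousOn_pi.1 hu 0)).add
      ((integrable_mulVec 1).continuousOn_mul (continuousOn_pi.1 hu 1))

end IsHamiltonian

theorem intervalIntegrable_energyDensity (hH : IsHamiltonian H l) {u : ℝ → Fin 2 → ℂ}
    (hu : ContinuousOn u (Icc 0 l)) :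
    IntervalIntegrable (fun x ↦ energyDensity (H x) (u x)) volume 0 l :=
  have := hH.intervalIntegrable_dotProduct_mulVec hu (continuous_star.comp_continuousOn hu)
  ⟨this.1.re, this.2.re⟩

namespace IsRowSolution

variable {u v : ℝ → Fin 2 → ℂ} {z' : ℂ}

theorem continuousOn (hu : IsRowSolution H l z u) : ContinuousOn u (uIcc 0 l) :=
  IsPrimitiveOn.continuousOn hu

theorem isPrimitiveOn_eval (hu : IsRowSolution H l z u) (j : Fin 2) :
    IsPrimitiveOn (fun x ↦ u x j)
      (fun s ↦ (-z • (u s ᵥ* ((H s).map (fun r ↦ (r : ℂ)) * Jmat))) j) 0 l :=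
  IsPrimitiveOn.continuousLinearMap_comp
    (ContinuousLinearMap.proj (R := ℝ) (φ := fun _ : Fin 2 ↦ ℂ) j) hu

theorem sub_smul (hu : IsRowSolution H l z u) (hv : IsRowSolution H l z v) (c : ℂ) :
    IsRowSolution H l z (fun x ↦ u x - c • v x) := by
  refine (hu.sub (hv.continuousLinearMap_comp (c • ContinuousLinearMap.id ℝ _))).congr_ae
    (.of_forall fun s ↦ ?_)
  simp only [Pi.sub_apply, sub_vecMul, smul_vecMul, smul_sub]
  simp [smul_comm c]

theorem star (hu : IsRowSolution H l z u) : IsRowSolution H l (conj z) (fun x ↦ star (u x)) := by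
  have := IsPrimitiveOn.continuousLinearMap_comp
    (starL' ℝ : (Fin 2 → ℂ) ≃L[ℝ] (Fin 2 → ℂ)).toContinuousLinearMap hu
  refine this.congr_ae (.of_forall fun s ↦ ?_)
  ext j
  fin_cases j <;> simp [vecMul, dotProduct, Fin.sum_univ_two, Jmat, mul_apply]

theorem isPrimitiveOn_wronskian (hH : IsHamiltonian H l) (hu : IsRowSolution H l z u)
    (hv : IsRowSolution H l z' v) :
    IsPrimitiveOn (fun x ↦ wronskian (u x) (v x))
      (fun x ↦ (z' - z) * (u x ⬝ᵥ (H x).map (fun r ↦ (r : ℂ)) *ᵥ v x)) 0 l := by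
  refine (((hu.isPrimitiveOn_eval 0).mul (hv.isPrimitiveOn_eval 1)).sub
    ((hu.isPrimitiveOn_eval 1).mul (hv.isPrimitiveOn_eval 0))).congr_ae ?_
  rw [uIcc_of_le hH.nonneg]
  filter_upwards [hH.posSemidef] with x hx
  have hsymm := isHermitian_iff_isSymm.1 hx.isHermitian
  simp only [Jmat, Pi.smul_apply, vecMul, dotProduct, mul_apply, map_apply, of_apply, cons_val',
    cons_val_zero, cons_val_fin_one, Fin.sum_univ_two, mul_zero, cons_val_one, mul_one, zero_add,
    smul_eq_mul, neg_mul, mul_neg, add_zero, Finset.sum_neg_distrib, neg_add_rev, Pi.sub_apply,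
    Pi.add_apply, Pi.mul_apply, hsymm.apply 0 1, mulVec]
  ring

theorem isPrimitiveOn_flux (hH : IsHamiltonian H l) (hu : IsRowSolution H l z u) :
    IsPrimitiveOn (fun x ↦ flux (u x)) (fun x ↦ z.im * energyDensity (H x) (u x)) 0 l := by
  have := (isPrimitiveOn_wronskian hH hu hu.star).continuousLinearMap_comp
    ((-(1 / 2) : ℝ) • Complex.imCLM)
  convert this using 1
  · ext x
    simp only [flux, Complex.mul_im, Complex.conj_im, mul_neg, Complex.conj_re, one_div,
      FunLike.coe_smul, neg_smul, wronskian, Pi.star_apply, RCLike.star_def, Function.comp_apply,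
      Pi.neg_apply, Pi.smul_apply, Complex.imCLM_apply, Complex.sub_im, smul_eq_mul]
    ring
  · ext x
    simp only [energyDensity, mulVec_fin_two, Nat.succ_eq_add_one, Nat.reduceAdd, map_apply,
      Pi.star_apply, RCLike.star_def, dotProduct_cons, dotProduct_of_isEmpty, add_zero,
      Complex.add_re, Complex.mul_re, Complex.ofReal_re, Complex.conj_re, Complex.ofReal_im,
      Complex.conj_im, mul_neg, zero_mul, neg_zero, sub_zero, Complex.add_im, Complex.mul_im,
      one_div, FunLike.coe_smul, neg_smul, Function.comp_apply, Pi.neg_apply, Pi.smul_apply,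
      Complex.imCLM_apply, Complex.sub_re, sub_self, Complex.sub_im, zero_add, smul_eq_mul]
    ring

end IsRowSolution

theorem exponentialType_sq_le (hH : IsHamiltonian H l) {u v : ℝ → Fin 2 → ℂ}
    (hu : ContinuousOn u (Icc 0 l)) (hv : ContinuousOn v (Icc 0 l))
    (huv : ∀ x ∈ Icc 0 l, wronskian (u x) (v x) = 1) :
    exponentialType H l ^ 2 ≤
      (∫ x in 0..l, energyDensity (H x) (u x)) * ∫ x in 0..l, energyDensity (H x) (v x) := by
  have ae_Ioc {p : ℝ → Prop} (h : ∀ᵐ x ∂volume.restrict (Icc 0 l), p x) :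
      ∀ᵐ x ∂volume.restrict (Ioc 0 l), p x :=
    ae_restrict_of_ae_restrict_of_subset Ioc_subset_Icc_self h
  simp only [exponentialType, intervalIntegral.integral_of_le hH.nonneg]
  refine sq_integral_le_integral_mul_integral (intervalIntegrable_energyDensity hH hu).1
    (intervalIntegrable_energyDensity hH hv).1 hH.intervalIntegrable_sqrt_det.1 ?_ ?_ ?_
  · filter_upwards [ae_Ioc hH.posSemidef] with x hx using energyDensity_nonneg hx _
  · filter_upwards [ae_Ioc hH.posSemidef] with x hx using energyDensity_nonneg hx _
  · filter_upwards [ae_Ioc hH.posSemidef, ae_Ioc (ae_restrict_mem measurableSet_Icc)]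
      with x hx hxl
    rw [Real.sq_sqrt hx.det_nonneg]
    simpa only [huv x hxl, map_one, mul_one] using
      det_mul_normSq_wronskian_le (isHermitian_iff_isSymm.1 hx.isHermitian) (u x) (v x)

theorem integral_energyDensity_nonneg (hH : IsHamiltonian H l) (u : ℝ → Fin 2 → ℂ) :
    0 ≤ ∫ x in 0..l, energyDensity (H x) (u x) :=
  intervalIntegral.integral_nonneg_of_ae_restrict hH.nonneg <| by
    filter_upwards [hH.posSemidef] with x hx using energyDensity_nonneg hx _

namespace IsRowSolution

variable {u v : ℝ → Fin 2 → ℂ} {x : ℝ}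

theorem wronskian_eq (hH : IsHamiltonian H l) (hu : IsRowSolution H l z u)
    (hv : IsRowSolution H l z v) (hx : x ∈ Icc 0 l) :
    wronskian (u x) (v x) = wronskian (u 0) (v 0) := by
  rw [← uIcc_of_le hH.nonneg] at hx
  simpa only [sub_self, zero_mul, intervalIntegral.integral_zero, add_zero] using
    (isPrimitiveOn_wronskian hH hu hv).eq_add_integral x hx

theorem flux_eq_add_integral (hH : IsHamiltonian H l) (hu : IsRowSolution H l z u)
    (hx : x ∈ Icc 0 l) :
    flux (u x) = flux (u 0) + z.im * ∫ s in 0..x, energyDensity (H s) (u s) := by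
  rw [← intervalIntegral.integral_const_mul]
  exact (hu.isPrimitiveOn_flux hH).eq_add_integral x (uIcc_of_le hH.nonneg ▸ hx)

theorem monotoneOn_flux (hH : IsHamiltonian H l) (hu : IsRowSolution H l z u) (hz : 0 ≤ z.im) :
    MonotoneOn (fun x ↦ flux (u x)) (Icc 0 l) := by
  refine (hu.isPrimitiveOn_flux hH).monotoneOn hH.nonneg ?_
  filter_upwards [hH.posSemidef] with x hx using mul_nonneg hz (energyDensity_nonneg hx _)

theorem flux_mul_exp_le (hH : IsHamiltonian H l) (hu : IsRowSolution H l z u) (hz : 0 ≤ z.im)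
    (hx : x ∈ Icc 0 l) :
    flux (u x) * Real.exp (2 * z.im * (exponentialType H l - exponentialType H x)) ≤
      flux (u l) := by
  have mono := (hu.isPrimitiveOn_flux hH).monotoneOn_mul_exp_neg
    (hH.isPrimitiveOn_exponentialType.continuousLinearMap_comp
      ((2 * z.im) • ContinuousLinearMap.id ℝ ℝ)) hH.nonneg <| by
    filter_upwards [hH.posSemidef] with x hx
    calc 2 * z.im * √(H x).det * flux (u x)
        ≤ z.im * (2 * √(H x).det * |flux (u x)|) := by
          rw [mul_comm 2 z.im, mul_assoc z.im, mul_assoc z.im]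
          gcongr
          exact le_abs_self _
      _ ≤ z.im * energyDensity (H x) (u x) :=
          mul_le_mul_of_nonneg_left (two_mul_sqrt_det_mul_abs_flux_le hx _) hz
  have at_ends := mono hx ⟨hH.nonneg, le_rfl⟩ hx.2
  simp only [Function.comp_apply, _root_.smul_apply, ContinuousLinearMap.id_apply,
    smul_eq_mul] at at_ends
  calc flux (u x) * Real.exp (2 * z.im * (exponentialType H l - exponentialType H x))
      = flux (u x) * Real.exp (-(2 * z.im * exponentialType H x)) *
          Real.exp (2 * z.im * exponentialType H l) := by
        rw [mul_assoc (flux _), ← Real.exp_add]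
        ring_nf
    _ ≤ flux (u l) * Real.exp (-(2 * z.im * exponentialType H l)) *
          Real.exp (2 * z.im * exponentialType H l) := by gcongr
    _ = flux (u l) := by rw [mul_assoc, ← Real.exp_add, neg_add_cancel, Real.exp_zero, mul_one]

end IsRowSolution

section WeylDisc

variable {u v : Fin 2 → ℂ} {q q₁ q₂ : ℂ}

/-- The Weyl disc of the monodromy matrix with rows `u` and `v`: the parameters `q` for which the
flux of `u - q v` is nonpositive. It is a disc of radius `|wronskian u v| / (2 flux v)` when
`0 < flux v`. -/
def weylDisc (u v : Fin 2 → ℂ) : Set ℂ := {q | flux (u - q • v) ≤ 0}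

theorem norm_sub_center_le_of_mem_weylDisc (hv : 0 ≤ flux v) (hq : q ∈ weylDisc u v) :
    ‖2 * flux v * q - Complex.I * conj (v 1 * conj (u 0) - conj (u 1) * v 0)‖ ≤
      ‖wronskian u v‖ := by
  have disc_equation :
      Complex.normSq (2 * flux v * q - Complex.I * conj (v 1 * conj (u 0) - conj (u 1) * v 0)) =
        4 * flux v * flux (u - q • v) + Complex.normSq (wronskian u v) := by
    simp only [flux, Complex.mul_im, Complex.conj_im, mul_neg, Complex.conj_re,
      Complex.ofReal_add, Complex.ofReal_neg, Complex.ofReal_mul, map_sub, map_mul,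
      RingHomCompTriple.comp_apply, RingHom.id_apply, Complex.normSq_apply, Complex.sub_re,
      Complex.mul_re, Complex.re_ofNat, Complex.add_re, Complex.neg_re, Complex.ofReal_re,
      Complex.ofReal_im, mul_zero, sub_zero, Complex.im_ofNat, Complex.add_im, Complex.neg_im,
      zero_mul, add_zero, neg_zero, Complex.I_re, neg_mul, sub_neg_eq_add, Complex.I_im,
      Complex.sub_im, one_mul, zero_sub, neg_sub, zero_add, Pi.sub_apply, Pi.smul_apply,
      smul_eq_mul, neg_neg, wronskian]
    ring
  refine le_of_sq_le_sq ?_ (norm_nonneg _)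
  rw [← Complex.normSq_eq_norm_sq, ← Complex.normSq_eq_norm_sq, disc_equation]
  exact add_le_of_nonpos_left (mul_nonpos_of_nonneg_of_nonpos (by positivity) hq)

theorem flux_mul_norm_sub_le_of_mem_weylDisc (hv : 0 ≤ flux v) (hq₁ : q₁ ∈ weylDisc u v)
    (hq₂ : q₂ ∈ weylDisc u v) : flux v * ‖q₁ - q₂‖ ≤ ‖wronskian u v‖ := by
  have := norm_sub_le_of_le (norm_sub_center_le_of_mem_weylDisc hv hq₁)
    (norm_sub_center_le_of_mem_weylDisc hv hq₂)
  rw [sub_sub_sub_cancel_right, ← mul_sub, norm_mul, norm_mul, Complex.norm_real,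
    Real.norm_of_nonneg hv, Complex.norm_two] at this
  linarith

theorem mobius_mem_weylDisc (hv : 0 < flux v) {γ : ℂ} (hγ : 0 ≤ γ.im) :
    (u 0 * γ + u 1) / (v 0 * γ + v 1) ∈ weylDisc u v := by
  have denom_ne_zero : v 0 * γ + v 1 ≠ 0 := fun h ↦ by
    have flux_eq : flux v = -(Complex.normSq (v 0) * γ.im) := by
      rw [flux, eq_neg_of_add_eq_zero_right h]
      simp only [neg_mul, Complex.neg_im, Complex.mul_im, Complex.mul_re, Complex.conj_im,
        mul_neg, Complex.conj_re, neg_add_rev, neg_neg, Complex.normSq_apply]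
      ring
    exact hv.not_ge (flux_eq ▸ neg_nonpos.2 (mul_nonneg (Complex.normSq_nonneg _) hγ))
  set q := (u 0 * γ + u 1) / (v 0 * γ + v 1)
  have q_mul_denom : q * (v 0 * γ + v 1) = u 0 * γ + u 1 := div_mul_cancel₀ _ denom_ne_zero
  have apply_zero : (u - q • v) 0 = wronskian u v / (v 0 * γ + v 1) := by
    rw [eq_div_iff denom_ne_zero, wronskian, Pi.sub_apply, Pi.smul_apply, smul_eq_mul]
    linear_combination -v 0 * q_mul_denom
  have apply_one : (u - q • v) 1 = -γ * (wronskian u v / (v 0 * γ + v 1)) := by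
    rw [← mul_div_assoc, eq_div_iff denom_ne_zero, wronskian, Pi.sub_apply, Pi.smul_apply,
      smul_eq_mul]
    linear_combination -v 1 * q_mul_denom
  rw [weylDisc, mem_ofPred_eq, flux, apply_zero, apply_one, mul_assoc, Complex.mul_conj,
    Complex.im_mul_ofReal, Complex.neg_im]
  exact mul_nonpos_of_nonpos_of_nonneg (neg_nonpos.2 hγ) (Complex.normSq_nonneg _)

theorem ratio_mem_weylDisc (hv : 0 < flux v) : u 0 / v 0 ∈ weylDisc u v := by
  have denom_ne_zero : v 0 ≠ 0 := fun h ↦ by simp [flux, h] at hv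
  have apply_zero : (u - (u 0 / v 0) • v) 0 = 0 := by
    simp [div_mul_cancel₀ _ denom_ne_zero]
  rw [weylDisc, mem_ofPred_eq, flux, apply_zero, map_zero, mul_zero, Complex.zero_im]

end WeylDisc

theorem isRowSolution_of_isFundamentalSolution (hH : IsHamiltonian H l)
    {W : ℂ → ℝ → Matrix (Fin 2) (Fin 2) ℂ} (hW : IsFundamentalSolution l H W) (z : ℂ)
    (i : Fin 2) : IsRowSolution H l z (fun x ↦ W z x i) := by
  refine .pi fun j ↦ ⟨?_, fun x hx ↦ ?_⟩
  · have entry_eq (s : ℝ) : (-z • (W z s i ᵥ* ((H s).map (fun r ↦ (r : ℂ)) * Jmat))) j =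
        -z * (W z s i ⬝ᵥ (H s).map (fun r ↦ (r : ℂ)) *ᵥ fun k ↦ Jmat k j) := rfl
    simp only [entry_eq]
    exact (hH.intervalIntegrable_dotProduct_mulVec (continuousOn_pi.2 fun j ↦ hW.1 z i j)
      continuousOn_const).const_mul _
  · rw [uIcc_of_le hH.nonneg] at hx
    have entry_eq (s : ℝ) : (-z • (W z s i ᵥ* ((H s).map (fun r ↦ (r : ℂ)) * Jmat))) j =
        -z * (W z s * (H s).map (fun r ↦ (r : ℂ)) * Jmat) i j := by
      rw [Matrix.mul_assoc, mul_apply_eq_vecMul]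
      rfl
    simp only [entry_eq]
    rw [hW.2 z x hx i j, hW.2 z 0 ⟨le_rfl, hH.nonneg⟩ i j, intervalIntegral.integral_const_mul]
    simp [sub_eq_add_neg]

/-- `u` and `v` are the rows of the fundamental solution on `[0, l]` with value `1` at `0`. -/
structure IsFundamentalPair (H : ℝ → Matrix (Fin 2) (Fin 2) ℝ) (l : ℝ) (z : ℂ)
    (u v : ℝ → Fin 2 → ℂ) : Prop where
  fst : IsRowSolution H l z u
  snd : IsRowSolution H l z v
  fst_zero : u 0 = ![1, 0]
  snd_zero : v 0 = ![0, 1]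

namespace IsFundamentalPair

variable {u v : ℝ → Fin 2 → ℂ} {q q₁ q₂ : ℂ} {x K : ℝ}

theorem wronskian_eq_one (hH : IsHamiltonian H l) (h : IsFundamentalPair H l z u v)
    (hx : x ∈ Icc 0 l) : wronskian (u x) (v x) = 1 := by
  rw [h.fst.wronskian_eq hH h.snd hx, h.fst_zero, h.snd_zero]
  simp [wronskian]

theorem flux_snd (hH : IsHamiltonian H l) (h : IsFundamentalPair H l z u v) (hx : x ∈ Icc 0 l) :
    flux (v x) = z.im * ∫ s in 0..x, energyDensity (H s) (v s) := by
  rw [h.snd.flux_eq_add_integral hH hx, h.snd_zero]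
  simp [flux]

theorem flux_snd_pos (hH : IsHamiltonian H l) (h : IsFundamentalPair H l z u v) (hz : 0 < z.im)
    (ha : 0 < exponentialType H l) : 0 < flux (v l) := by
  have sq_le := exponentialType_sq_le hH (uIcc_of_le hH.nonneg ▸ h.fst.continuousOn)
    (uIcc_of_le hH.nonneg ▸ h.snd.continuousOn) fun _ ↦ h.wronskian_eq_one hH
  rw [h.flux_snd hH ⟨hH.nonneg, le_rfl⟩]
  exact mul_pos hz
    (pos_of_mul_pos_right ((pow_pos ha 2).trans_le sq_le) (integral_energyDensity_nonneg hH u))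

theorem integral_energyDensity_sub_smul_le (hH : IsHamiltonian H l)
    (h : IsFundamentalPair H l z u v) (hz : 0 ≤ z.im) (hx : x ∈ Icc 0 l)
    (hq : q ∈ weylDisc (u l) (v l)) :
    z.im * ∫ s in 0..x, energyDensity (H s) (u s - q • v s) ≤ q.im := by
  have hχ := h.fst.sub_smul h.snd q
  have flux_le : flux (u x - q • v x) ≤ 0 :=
    (hχ.monotoneOn_flux hH hz hx ⟨hH.nonneg, le_rfl⟩ hx.2).trans hq
  rw [hχ.flux_eq_add_integral hH hx, h.fst_zero, h.snd_zero] at flux_le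
  have flux_zero : flux (![1, 0] - q • ![0, 1]) = -q.im := by simp [flux]
  linarith

theorem exponentialType_sq_mul_le_mul_flux (hH : IsHamiltonian H l)
    (h : IsFundamentalPair H l z u v) (hz : 0 < z.im) (hx : x ∈ Icc 0 l)
    (hq : q ∈ weylDisc (u l) (v l)) (hK : q.im ≤ K * z.im) :
    z.im * exponentialType H x ^ 2 ≤ K * flux (v x) := by
  have continuousOn_Icc {w : ℝ → Fin 2 → ℂ} (hw : IsRowSolution H l z w) :
      ContinuousOn w (Icc 0 x) :=
    hw.continuousOn.mono ((Icc_subset_Icc_right hx.2).trans Icc_subset_uIcc)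
  have wronskian_eq_one (s) (hs : s ∈ Icc 0 x) : wronskian (u s - q • v s) (v s) = 1 := by
    rw [← h.wronskian_eq_one hH ⟨hs.1, hs.2.trans hx.2⟩]
    simp only [wronskian, Pi.sub_apply, Pi.smul_apply, smul_eq_mul]
    ring
  have sq_le := exponentialType_sq_le (hH.mono hx) (continuousOn_Icc (h.fst.sub_smul h.snd q))
    (continuousOn_Icc h.snd) wronskian_eq_one
  have weyl_energy_le : ∫ s in 0..x, energyDensity (H s) (u s - q • v s) ≤ K :=
    le_of_mul_le_mul_left ((h.integral_energyDensity_sub_smul_le hH hz.le hx hq).trans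
      (hK.trans_eq (mul_comm _ _))) hz
  rw [h.flux_snd hH hx, mul_left_comm]
  gcongr
  exact sq_le.trans
    (mul_le_mul_of_nonneg_right weyl_energy_le (integral_energyDensity_nonneg (hH.mono hx) v))

theorem norm_sub_le_of_mem_weylDisc (hH : IsHamiltonian H l) (h : IsFundamentalPair H l z u v)
    (hz : 0 < z.im) (hx : x ∈ Icc 0 l) (hq₁ : q₁ ∈ weylDisc (u l) (v l))
    (hq₂ : q₂ ∈ weylDisc (u l) (v l)) (hK : q₁.im ≤ K * z.im) (hK₀ : 0 ≤ K) :
    z.im * exponentialType H x ^ 2 *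
      Real.exp (2 * z.im * (exponentialType H l - exponentialType H x)) * ‖q₁ - q₂‖ ≤ K := by
  have flux_nonneg : 0 ≤ flux (v l) := by
    rw [h.flux_snd hH ⟨hH.nonneg, le_rfl⟩]
    exact mul_nonneg hz.le (integral_energyDensity_nonneg hH v)
  set growth := Real.exp (2 * z.im * (exponentialType H l - exponentialType H x))
  calc z.im * exponentialType H x ^ 2 * growth * ‖q₁ - q₂‖
      ≤ K * flux (v x) * growth * ‖q₁ - q₂‖ := by
        rw [mul_assoc _ growth, mul_assoc _ growth]
        exact mul_le_mul_of_nonneg_right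
          (h.exponentialType_sq_mul_le_mul_flux hH hz hx hq₁ hK) (by positivity)
    _ ≤ K * (flux (v l) * ‖q₁ - q₂‖) := by
        rw [mul_assoc K, mul_assoc K]
        gcongr
        exact h.snd.flux_mul_exp_le hH hz.le hx
    _ ≤ K * ‖wronskian (u l) (v l)‖ := by
        gcongr
        exact flux_mul_norm_sub_le_of_mem_weylDisc flux_nonneg hq₁ hq₂
    _ = K := by rw [h.wronskian_eq_one hH ⟨hH.nonneg, le_rfl⟩, norm_one, mul_one]

theorem of_isFundamentalSolution (hH : IsHamiltonian H l) {W : ℂ → ℝ → Matrix (Fin 2) (Fin 2) ℂ}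
    (hW : IsFundamentalSolution l H W) (z : ℂ) :
    IsFundamentalPair H l z (fun x ↦ W z x 0) (fun x ↦ W z x 1) where
  fst := isRowSolution_of_isFundamentalSolution hH hW z 0
  snd := isRowSolution_of_isFundamentalSolution hH hW z 1
  fst_zero := by ext j; fin_cases j <;> simp [hW.2 z 0 ⟨le_rfl, hH.nonneg⟩]
  snd_zero := by ext j; fin_cases j <;> simp [hW.2 z 0 ⟨le_rfl, hH.nonneg⟩]

end IsFundamentalPair
end CanonicalSystem

section LaplaceTransform
open Filter Topology Asymptotics Complex

variable {E : Type*} [NormedAddCommGroup E] [NormedSpace ℂ E] {F : ℝ → E} {T : ℝ}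

/-- The one-sided Laplace transform of a vector-valued function, at a real argument. -/
noncomputable def laplaceTransform (F : ℝ → E) (y : ℝ) : E :=
  ∫ t in Ioi 0, Real.exp (-(y * t)) • F t

/-- The Laplace transform of the restriction of `F` to `[0, T]`, normalized by the factor
`exp (z * T)`, which makes it bounded on the left half-plane. -/
noncomputable def truncatedLaplace (F : ℝ → E) (T : ℝ) (z : ℂ) : E :=
  ∫ s in 0..T, cexp (z * (T - s)) • F s

theorem norm_cexp_mul_sub (z : ℂ) (T s : ℝ) :
    ‖cexp (z * (T - s))‖ = Real.exp (z.re * (T - s)) := by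
  rw [← ofReal_sub, norm_exp, re_mul_ofReal]

theorem intervalIntegrable_cexp_smul (hF : IntervalIntegrable F volume 0 T) (z : ℂ) :
    IntervalIntegrable (fun s : ℝ ↦ cexp (z * (T - s)) • F s) volume 0 T :=
  hF.continuousOn_smul (by fun_prop)

theorem differentiable_truncatedLaplace (hF : IntervalIntegrable F volume 0 T) :
    Differentiable ℂ (truncatedLaplace F T) := by
  intro z₀
  have bound (z : ℂ) (hz : z ∈ Metric.ball z₀ 1) (s : ℝ) :
      ‖(cexp (z * (T - s)) * (T - s)) • F s‖ ≤
        (Real.exp ((‖z₀‖ + 1) * |T - s|) * |T - s|) • ‖F s‖ := by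
    have hz' : ‖z‖ ≤ ‖z₀‖ + 1 := by
      linarith [norm_le_norm_add_norm_sub' z z₀, mem_ball_iff_norm.1 hz]
    rw [norm_smul, norm_mul, norm_cexp_mul_sub, ← ofReal_sub, norm_real, Real.norm_eq_abs,
      smul_eq_mul]
    have exponent_le : z.re * (T - s) ≤ (‖z₀‖ + 1) * |T - s| :=
      calc z.re * (T - s) ≤ |z.re| * |T - s| := (le_abs_self _).trans_eq (abs_mul _ _)
        _ ≤ (‖z₀‖ + 1) * |T - s| := by gcongr; exact (abs_re_le_norm z).trans hz'
    gcongr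
  have integrable_deriv :
      IntervalIntegrable (fun s : ℝ ↦ (cexp (z₀ * (T - s)) * (T - s)) • F s) volume 0 T :=
    hF.continuousOn_smul (by fun_prop)
  refine (intervalIntegral.hasDerivAt_integral_of_dominated_loc_of_deriv_le
    (F' := fun z s ↦ (cexp (z * (T - s)) * (T - s)) • F s)
    (Metric.ball_mem_nhds z₀ one_pos)
    (.of_forall fun z ↦ (intervalIntegrable_cexp_smul hF z).def'.aestronglyMeasurable)
    (intervalIntegrable_cexp_smul hF z₀)
    integrable_deriv.def'.aestronglyMeasurable
    (.of_forall fun s _ z hz ↦ bound z hz s)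
    (hF.norm.continuousOn_smul (by fun_prop)) (.of_forall fun s _ z _ ↦ ?_)).2.differentiableAt
  simpa only [one_mul, id_eq] using
    ((hasDerivAt_id z).mul_const ((T : ℂ) - s)).cexp.smul_const (F s)

theorem norm_truncatedLaplace_le (hT : 0 ≤ T) (hF : IntervalIntegrable F volume 0 T) {z : ℂ}
    {N : ℝ} (hN : ∀ s ∈ Ioc 0 T, z.re * (T - s) ≤ N) :
    ‖truncatedLaplace F T z‖ ≤ Real.exp N * ∫ s in 0..T, ‖F s‖ := by
  rw [← intervalIntegral.integral_const_mul]
  refine intervalIntegral.norm_integral_le_of_norm_le hT (.of_forall fun s hs ↦ ?_)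
    (hF.norm.const_mul _)
  rw [norm_smul, norm_cexp_mul_sub]
  gcongr
  exact hN s hs

theorem norm_truncatedLaplace_le_of_re_nonpos (hT : 0 ≤ T) (hF : IntervalIntegrable F volume 0 T)
    {z : ℂ} (hz : z.re ≤ 0) : ‖truncatedLaplace F T z‖ ≤ ∫ s in 0..T, ‖F s‖ := by
  simpa only [Real.exp_zero, one_mul] using norm_truncatedLaplace_le (N := 0) hT hF
    fun s hs ↦ mul_nonpos_of_nonpos_of_nonneg hz (sub_nonneg.2 hs.2)

theorem tendsto_truncatedLaplace_atBot (hT : 0 ≤ T) (hF : IntervalIntegrable F volume 0 T) :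
    Tendsto (fun x : ℝ ↦ truncatedLaplace F T x) atBot (𝓝 0) := by
  have h : Tendsto (fun x : ℝ ↦ truncatedLaplace F T x) atBot (𝓝 (∫ _ in 0..T, (0 : E))) := by
    refine intervalIntegral.tendsto_integral_filter_of_dominated_convergence (fun s ↦ ‖F s‖)
      (.of_forall fun x ↦ (intervalIntegrable_cexp_smul hF x).def'.aestronglyMeasurable) ?_
      hF.norm ?_
    · filter_upwards [eventually_le_atBot 0] with x hx
      refine .of_forall fun s hs ↦ ?_
      rw [uIoc_of_le hT] at hs
      rw [norm_smul, norm_cexp_mul_sub, ofReal_re]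
      exact mul_le_of_le_one_left (norm_nonneg _)
        (Real.exp_le_one_iff.2 (mul_nonpos_of_nonpos_of_nonneg hx (sub_nonneg.2 hs.2)))
    · filter_upwards [Measure.ae_ne volume T] with s hsT hs
      rw [uIoc_of_le hT] at hs
      rw [← zero_smul ℂ (F s)]
      refine Tendsto.smul_const ?_ _
      rw [tendsto_zero_iff_norm_tendsto_zero]
      simp only [norm_cexp_mul_sub, ofReal_re]
      exact Real.tendsto_exp_atBot.comp
        (tendsto_id.atBot_mul_const (sub_pos.2 (hs.2.lt_of_ne hsT)))
  simpa only [intervalIntegral.integral_zero] using h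

theorem truncatedLaplace_eq_zero (hT : 0 ≤ T) (hF : IntervalIntegrable F volume 0 T)
    (h : (fun x : ℝ ↦ truncatedLaplace F T x) =O[atTop] fun _ ↦ (1 : ℝ)) (z : ℂ) :
    truncatedLaplace F T z = 0 := by
  have diff : Differentiable ℂ (truncatedLaplace F T) := differentiable_truncatedLaplace hF
  have order_one : truncatedLaplace F T =O[Bornology.cobounded ℂ ⊓ 𝓟 {z | 0 < z.re}]
      fun z ↦ Real.exp (T * ‖z‖ ^ (1 : ℝ)) := by
    refine .of_bound (∫ s in 0..T, ‖F s‖) (.of_forall fun w ↦ ?_)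
    rw [Real.norm_of_nonneg (Real.exp_pos _).le, Real.rpow_one, mul_comm]
    refine norm_truncatedLaplace_le hT hF fun s hs ↦ ?_
    calc w.re * (T - s) ≤ ‖w‖ * T := mul_le_mul (re_le_norm w) (sub_le_self _ hs.1.le)
          (sub_nonneg.2 hs.2) (norm_nonneg w)
      _ = T * ‖w‖ := mul_comm _ _
  have bounded (w : ℂ) : ‖truncatedLaplace F T w‖ ≤ ∫ s in 0..T, ‖F s‖ := by
    rcases le_total w.re 0 with hw | hw
    · exact norm_truncatedLaplace_le_of_re_nonpos hT hF hw
    · exact PhragmenLindelof.right_half_plane_of_bounded_on_real diff.diffContOnCl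
        ⟨1, one_lt_two, T, order_one⟩ h.isBoundedUnder_le
        (fun x ↦ norm_truncatedLaplace_le_of_re_nonpos hT hF (by simp)) hw
  have const (w : ℂ) : truncatedLaplace F T w = truncatedLaplace F T z :=
    diff.apply_eq_apply_of_bounded
      (isBounded_iff_forall_norm_le.2 ⟨_, forall_mem_range.2 bounded⟩) w z
  exact tendsto_nhds_unique (by simpa only [const] using tendsto_const_nhds)
    (tendsto_truncatedLaplace_atBot hT hF)

theorem eq_zero_of_truncatedLaplace_eq_zero [CompleteSpace E] (hT : 0 ≤ T)
    (hF : IntervalIntegrable F volume 0 T) (h : ∀ z, truncatedLaplace F T z = 0) {s : ℝ}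
    (hs : s ∈ Ioo 0 T) (hFs : ContinuousAt F s) : F s = 0 := by
  set G : ℝ → E := (Ioc 0 T).indicator F with hG
  have hGF : ∀ x ∈ Ioo 0 T, G x = F x := fun x hx ↦
    indicator_of_mem (Ioo_subset_Ioc_self hx) F
  have hGint : Integrable G := (integrable_indicator_iff measurableSet_Ioc).2 hF.1
  have hGfourier : FourierTransform.fourier G = 0 := by
    funext w
    set z : ℂ := (2 * Real.pi * w : ℝ) * I
    calc FourierTransform.fourier G w = cexp (-(z * T)) • truncatedLaplace F T z := by
          rw [Real.fourier_eq', truncatedLaplace, ← intervalIntegral.integral_smul,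
            intervalIntegral.integral_of_le hT, ← integral_indicator measurableSet_Ioc]
          refine integral_congr_ae (.of_forall fun s ↦ ?_)
          by_cases hs : s ∈ Ioc 0 T
          · simp only [hG, indicator_of_mem hs, smul_smul, ← Complex.exp_add, z]
            congr 2
            simp only [neg_mul, RCLike.inner_apply, Real.ringHom_apply, ofReal_neg, ofReal_mul,
              ofReal_ofNat]
            ring
          · simp only [hG, indicator_of_notMem hs, smul_zero]
      _ = 0 := by rw [h, smul_zero]
  have hGs : ContinuousAt G s :=
    hFs.congr (eventually_of_mem (Ioo_mem_nhds hs.1 hs.2) fun x hx ↦ (hGF x hx).symm)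
  have inversion := hGint.fourierInv_fourier_eq (by rw [hGfourier]; exact integrable_zero _ _ _) hGs
  rw [← hGF s hs, ← inversion, hGfourier, Real.fourierInv_eq']
  simp only [Pi.zero_apply, smul_zero, integral_zero]

theorem exp_smul_eq_exp_sub_smul (F : ℝ → E) (σ y t : ℝ) :
    Real.exp (-(y * t)) • F t = Real.exp (-((y - σ) * t)) • Real.exp (-(σ * t)) • F t := by
  rw [smul_smul, ← Real.exp_add]
  ring_nf

theorem integrableOn_exp_smul_of_le {σ y : ℝ} (hσy : σ ≤ y)
    (hF : IntegrableOn (fun t ↦ Real.exp (-(σ * t)) • F t) (Ioi 0)) :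
    IntegrableOn (fun t ↦ Real.exp (-(y * t)) • F t) (Ioi 0) := by
  simp only [exp_smul_eq_exp_sub_smul F σ y]
  refine Integrable.bdd_smul (φ := fun t : ℝ ↦ Real.exp (-((y - σ) * t))) hF 1
    (Continuous.aestronglyMeasurable (by fun_prop)) ?_
  filter_upwards [ae_restrict_mem measurableSet_Ioi] with t ht
  rw [Real.norm_of_nonneg (Real.exp_pos _).le, Real.exp_le_one_iff, neg_nonpos]
  exact mul_nonneg (sub_nonneg.2 hσy) (mem_Ioi.1 ht).le

theorem norm_integral_exp_smul_le {σ y : ℝ} (hσy : σ ≤ y)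
    (hF : IntegrableOn (fun t ↦ Real.exp (-(σ * t)) • F t) (Ioi T)) :
    ‖∫ t in Ioi T, Real.exp (-(y * t)) • F t‖ ≤
      Real.exp (-((y - σ) * T)) * ∫ t in Ioi T, ‖Real.exp (-(σ * t)) • F t‖ := by
  rw [← integral_const_mul]
  refine norm_integral_le_of_norm_le (hF.norm.const_mul _) ?_
  filter_upwards [ae_restrict_mem measurableSet_Ioi] with t ht
  rw [exp_smul_eq_exp_sub_smul F σ, norm_smul, Real.norm_of_nonneg (Real.exp_pos _).le]
  exact mul_le_mul_of_nonneg_right (Real.exp_le_exp.2 (neg_le_neg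
    (mul_le_mul_of_nonneg_left (mem_Ioi.1 ht).le (sub_nonneg.2 hσy)))) (norm_nonneg _)

theorem truncatedLaplace_ofReal (F : ℝ → E) (T y : ℝ) :
    truncatedLaplace F T y = Real.exp (T * y) • ∫ t in 0..T, Real.exp (-(y * t)) • F t := by
  rw [truncatedLaplace, ← intervalIntegral.integral_smul]
  refine intervalIntegral.integral_congr fun t _ ↦ ?_
  rw [smul_smul, ← Real.exp_add, ← Complex.coe_smul]
  push_cast
  ring_nf

theorem isBigO_truncatedLaplace {σ : ℝ} (hT : 0 ≤ T)
    (hF : IntegrableOn (fun t ↦ Real.exp (-(σ * t)) • F t) (Ioi 0))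
    (h : laplaceTransform F =O[atTop] fun y ↦ Real.exp (-(T * y))) :
    (fun y : ℝ ↦ truncatedLaplace F T y) =O[atTop] fun _ ↦ (1 : ℝ) := by
  have tail : (fun y ↦ ∫ t in Ioi T, Real.exp (-(y * t)) • F t) =O[atTop]
      fun y ↦ Real.exp (-(T * y)) := by
    refine .of_bound (Real.exp (σ * T) * ∫ t in Ioi T, ‖Real.exp (-(σ * t)) • F t‖) ?_
    filter_upwards [eventually_ge_atTop σ] with y hy
    refine (norm_integral_exp_smul_le hy (hF.mono_set (Ioi_subset_Ioi hT))).trans_eq ?_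
    rw [Real.norm_of_nonneg (Real.exp_pos _).le, mul_right_comm, ← Real.exp_add]
    ring_nf
  have eq_smul : (fun y : ℝ ↦ truncatedLaplace F T y) =ᶠ[atTop] fun y ↦ Real.exp (T * y) •
      (laplaceTransform F y - ∫ t in Ioi T, Real.exp (-(y * t)) • F t) := by
    filter_upwards [eventually_ge_atTop σ] with y hy
    rw [truncatedLaplace_ofReal, laplaceTransform,
      ← intervalIntegral.integral_Ioi_sub_Ioi (integrableOn_exp_smul_of_le hy hF) hT]
  refine eq_smul.trans_isBigO ?_
  simpa only [← Real.exp_add, smul_eq_mul, add_neg_cancel, Real.exp_zero] using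
    (isBigO_refl (fun y ↦ Real.exp (T * y)) atTop).smul (h.sub tail)

theorem eqOn_zero_of_isBigO_laplaceTransform [CompleteSpace E] {σ : ℝ} (hT : 0 < T)
    (hF : ContinuousOn F (Icc 0 T)) (hFσ : IntegrableOn (fun t ↦ Real.exp (-(σ * t)) • F t) (Ioi 0))
    (h : laplaceTransform F =O[atTop] fun y ↦ Real.exp (-(T * y))) : EqOn F 0 (Icc 0 T) := by
  have integrable : IntervalIntegrable F volume 0 T := hF.intervalIntegrable_of_Icc hT.le
  have eq_zero_Ioo : EqOn F 0 (Ioo 0 T) := fun s hs ↦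
    eq_zero_of_truncatedLaplace_eq_zero hT.le integrable
      (truncatedLaplace_eq_zero hT.le integrable (isBigO_truncatedLaplace hT.le hFσ h)) hs
      (hF.continuousAt (Icc_mem_nhds hs.1 hs.2))
  exact eq_zero_Ioo.of_subset_closure hF continuousOn_const Ioo_subset_Icc_self
    (closure_Ioo hT.ne).ge

end LaplaceTransform

section HasLaplaceTransformAt

variable {E : Type*} [NormedAddCommGroup E] [NormedSpace ℂ E] {F G : ℝ → E} {L M : E} {y : ℝ}

/-- The Laplace integral of `F` at `y` converges absolutely, and its value is `L`. -/
structure HasLaplaceTransformAt (F : ℝ → E) (L : E) (y : ℝ) : Prop where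
  integrableOn : IntegrableOn (fun t ↦ Real.exp (-(y * t)) • F t) (Ioi 0)
  eq : laplaceTransform F y = L

namespace HasLaplaceTransformAt

theorem sub (hF : HasLaplaceTransformAt F L y) (hG : HasLaplaceTransformAt G M y) :
    HasLaplaceTransformAt (fun t ↦ F t - G t) (L - M) y where
  integrableOn := by
    simp only [smul_sub]
    exact hF.integrableOn.sub hG.integrableOn
  eq := by
    simp only [laplaceTransform, smul_sub]
    rw [integral_sub hF.integrableOn hG.integrableOn, ← hF.eq, ← hG.eq]
    rfl

theorem const_smul (c : ℂ) (hF : HasLaplaceTransformAt F L y) :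
    HasLaplaceTransformAt (fun t ↦ c • F t) (c • L) y where
  integrableOn := by
    simp only [smul_comm _ c]
    exact hF.integrableOn.smul c
  eq := by
    simp only [laplaceTransform, smul_comm _ c]
    rw [integral_smul, ← hF.eq]
    rfl

end HasLaplaceTransformAt

theorem integral_exp_neg_mul_pow (hy : 0 < y) (n : ℕ) :
    ∫ t in Ioi 0, Real.exp (-(y * t)) * t ^ n = n.factorial / y ^ (n + 1) := by
  have h := Real.integral_rpow_mul_exp_neg_mul_Ioi (a := n + 1) (by positivity) hy
  simp only [add_sub_cancel_right, Real.rpow_natCast, Real.Gamma_nat_eq_factorial] at h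
  rw [← Nat.cast_succ, Real.rpow_natCast, one_div, inv_pow, ← div_eq_inv_mul] at h
  simpa only [mul_comm (Real.exp _)] using h

theorem integrableOn_exp_neg_mul_pow (hy : 0 < y) (n : ℕ) :
    IntegrableOn (fun t : ℝ ↦ Real.exp (-(y * t)) * t ^ n) (Ioi 0) :=
  .of_integral_ne_zero (by rw [integral_exp_neg_mul_pow hy]; positivity)

theorem hasLaplaceTransformAt_pow (hy : 0 < y) (n : ℕ) :
    HasLaplaceTransformAt (fun t ↦ (t : ℂ) ^ n) (n.factorial / (y : ℂ) ^ (n + 1)) y := by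
  have cast (t : ℝ) : Real.exp (-(y * t)) • (t : ℂ) ^ n = (Real.exp (-(y * t)) * t ^ n : ℝ) := by
    rw [Complex.real_smul, Complex.ofReal_mul, Complex.ofReal_pow]
  constructor
  · simp only [cast]
    exact (integrableOn_exp_neg_mul_pow hy n).ofReal
  · simp only [laplaceTransform, cast]
    rw [integral_complex_ofReal, integral_exp_neg_mul_pow hy]
    norm_cast

theorem hasLaplaceTransformAt_cexp {ζ : ℂ} (hζ : ζ.re < y) :
    HasLaplaceTransformAt (fun t ↦ Complex.exp (ζ * t)) (1 / (y - ζ)) y := by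
  have hre : (ζ - y).re < 0 := by simpa only [Complex.sub_re, Complex.ofReal_re, sub_neg] using hζ
  have cexp_eq (t : ℝ) : Real.exp (-(y * t)) • Complex.exp (ζ * t) = Complex.exp ((ζ - y) * t) := by
    rw [Complex.real_smul, Complex.ofReal_exp, ← Complex.exp_add]
    push_cast
    ring_nf
  constructor
  · simpa only [cexp_eq] using integrableOn_exp_mul_complex_Ioi hre 0
  · simp only [laplaceTransform, cexp_eq]
    rw [integral_exp_mul_complex_Ioi hre, Complex.ofReal_zero, mul_zero, Complex.exp_zero,
      ← neg_sub, neg_div_neg_eq]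

end HasLaplaceTransformAt

section ScrewKernel

variable (lam t : ℝ)

theorem norm_cexp_I_mul_sub_one_sub_le (x : ℝ) :
    ‖Complex.exp (Complex.I * x) - 1 - Complex.I * x‖ ≤ 3 * x ^ 2 := by
  have norm_I_mul : ‖Complex.I * x‖ = |x| := by
    rw [norm_mul, Complex.norm_I, one_mul, Complex.norm_real, Real.norm_eq_abs]
  rcases le_total |x| 1 with hx | hx
  · have h := Complex.norm_exp_sub_one_sub_id_le (x := Complex.I * x) (norm_I_mul.trans_le hx)
    rw [norm_I_mul, sq_abs] at h
    linarith [sq_nonneg x]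
  · calc ‖Complex.exp (Complex.I * x) - 1 - Complex.I * x‖
        ≤ ‖Complex.exp (Complex.I * x) - 1‖ + ‖Complex.I * x‖ := norm_sub_le _ _
      _ ≤ |x| + |x| := add_le_add Real.norm_exp_I_mul_ofReal_sub_one_le norm_I_mul.le
      _ ≤ 3 * x ^ 2 := by rw [← sq_abs]; nlinarith

theorem one_add_sq_ne_zero : (1 + (lam : ℂ) ^ 2) ≠ 0 := by
  exact_mod_cast (by positivity : 1 + lam ^ 2 ≠ 0)

theorem one_add_sq_mul_eker {lam : ℝ} (hlam : lam ≠ 0) (t : ℝ) :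
    (1 + (lam : ℂ) ^ 2) * eker lam t =
      (Complex.exp (Complex.I * (lam * t : ℝ)) - 1 - Complex.I * (lam * t : ℝ)) / (lam : ℂ) ^ 2 +
        (Complex.exp (Complex.I * (lam * t : ℝ)) - 1) := by
  have hlam' : (lam : ℂ) ≠ 0 := Complex.ofReal_ne_zero.2 hlam
  have hne := one_add_sq_ne_zero lam
  rw [eker, if_neg hlam, Complex.ofReal_mul, ← mul_assoc]
  field_simp
  ring

theorem norm_eker_le : ‖eker lam t‖ ≤ (3 * t ^ 2 + 2) * (1 + lam ^ 2)⁻¹ := by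
  have norm_one_add_sq : ‖1 + (lam : ℂ) ^ 2‖ = 1 + lam ^ 2 := by
    rw [← Complex.ofReal_pow, ← Complex.ofReal_one, ← Complex.ofReal_add,
      Complex.norm_of_nonneg (by positivity)]
  rw [← div_eq_mul_inv, le_div_iff₀' (by positivity), ← norm_one_add_sq, ← norm_mul]
  rcases eq_or_ne lam 0 with rfl | hlam
  · have : ‖(1 + ((0 : ℝ) : ℂ) ^ 2) * eker 0 t‖ = t ^ 2 / 2 := by simp [eker]
    linarith [sq_nonneg t]
  · have hlam2 : 0 < lam ^ 2 := by positivity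
    rw [one_add_sq_mul_eker hlam]
    refine (norm_add_le _ _).trans (add_le_add ?_ ?_)
    · rw [norm_div, norm_pow, Complex.norm_real, Real.norm_eq_abs, sq_abs, div_le_iff₀ hlam2]
      exact (norm_cexp_I_mul_sub_one_sub_le _).trans_eq (by ring)
    · refine (norm_sub_le _ _).trans_eq ?_
      rw [Complex.norm_exp_I_mul_ofReal, norm_one, one_add_one_eq_two]

theorem measurable_eker : Measurable fun p : ℝ × ℝ ↦ eker p.1 p.2 :=
  Measurable.ite (measurableSet_eq_fun measurable_fst measurable_const) (by fun_prop) (by fun_prop)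

theorem continuous_eker : Continuous (eker lam) := by
  unfold eker
  split_ifs <;> fun_prop

theorem eker_zero_right : eker lam 0 = 0 := by
  rw [eker]
  split_ifs <;> simp

theorem hasLaplaceTransformAt_eker {y : ℝ} (hy : 0 < y) :
    HasLaplaceTransformAt (eker lam) (-(Complex.I / y ^ 2) *
      (1 / (lam - -(Complex.I * y)) - lam / (1 + (lam : ℂ) ^ 2))) y := by
  have hyc : (y : ℂ) ≠ 0 := Complex.ofReal_ne_zero.2 hy.ne'
  rcases eq_or_ne lam 0 with rfl | hlam
  · convert (hasLaplaceTransformAt_pow hy 2).const_smul (-1 / 2) using 1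
    · funext t
      rw [eker, if_pos rfl, smul_eq_mul]
      ring
    · simp only [Complex.ofReal_zero, sub_neg_eq_add, zero_add, one_div, mul_inv_rev,
        Complex.inv_I, mul_neg, ne_eq, OfNat.ofNat_ne_zero, not_false_eq_true, zero_pow, add_zero,
        div_one, sub_zero, neg_mul, neg_neg, Nat.factorial_two, Nat.cast_ofNat, Nat.reduceAdd,
        smul_eq_mul]
      field_simp
      exact Complex.I_sq
  · have hlam' : (lam : ℂ) ≠ 0 := Complex.ofReal_ne_zero.2 hlam
    have hne := one_add_sq_ne_zero lam
    have hre : (Complex.I * lam).re < y := by simpa using hy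
    have hden : (y : ℂ) - Complex.I * lam ≠ 0 := fun h ↦ by
      simpa [hy.ne'] using congrArg Complex.re h
    convert (((hasLaplaceTransformAt_cexp hre).sub (hasLaplaceTransformAt_pow hy 0)).const_smul
      (1 / (lam : ℂ) ^ 2)).sub ((hasLaplaceTransformAt_pow hy 1).const_smul
        (Complex.I / (lam * (1 + (lam : ℂ) ^ 2)))) using 1
    · funext t
      rw [eker, if_neg hlam, smul_eq_mul, smul_eq_mul]
      field_simp
    · have factor : (lam : ℂ) - -(Complex.I * y) = Complex.I * (y - Complex.I * lam) := by
        linear_combination (lam : ℂ) * Complex.I_sq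
      rw [factor]
      simp only [one_div, mul_inv_rev, Complex.inv_I, mul_neg, neg_mul, Nat.factorial_zero,
        Nat.cast_one, zero_add, pow_one, smul_eq_mul, Nat.factorial_one, Nat.reduceAdd]
      field_simp
      ring

end ScrewKernel

theorem sigmaFinite_of_integrable_of_ne_zero {X E : Type*} [MeasurableSpace X]
    [NormedAddCommGroup E] {μ : Measure X} {f : X → E} (hf : Integrable f μ)
    (hf₀ : ∀ x, f x ≠ 0) : SigmaFinite μ := by
  refine Measure.sigmaFinite_of_countable
    (countable_range fun n : ℕ ↦ {x | 1 / ((n : ℝ) + 1) ≤ ‖f x‖}) ?_ ?_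
  · rintro _ ⟨n, rfl⟩
    exact hf.measure_norm_ge_lt_top (by positivity)
  · refine eq_univ_of_forall fun x ↦ ?_
    obtain ⟨n, hn⟩ := exists_nat_one_div_lt (norm_pos_iff.2 (hf₀ x))
    exact mem_sUnion.2 ⟨_, mem_range_self n, hn.le⟩

section ScrewFunction

variable {τ : Measure ℝ} (hτ : Integrable (fun lam : ℝ ↦ (1 + lam ^ 2)⁻¹) τ)

/-- The screw function of `τ` shifted by the affine term that corresponds to `α + β z`: its Laplace
transform is `-(i / y²)` times `herglotzFn τ α β (-i y)`. -/
noncomputable def screwFn (τ : Measure ℝ) (α β t : ℝ) : ℂ :=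
  (∫ lam, eker lam t ∂τ) - Complex.I * α * t - β

theorem screwFn_zero (τ : Measure ℝ) (α β : ℝ) : screwFn τ α β 0 = -β := by
  simp only [screwFn, eker_zero_right, integral_zero, Complex.ofReal_zero, mul_zero, sub_zero,
    zero_sub]

include hτ

theorem continuous_integral_eker : Continuous fun t ↦ ∫ lam, eker lam t ∂τ := by
  refine continuous_iff_continuousAt.2 fun t₀ ↦ continuousAt_of_dominated
    (bound := fun lam ↦ (3 * (|t₀| + 1) ^ 2 + 2) * (1 + lam ^ 2)⁻¹)
    (.of_forall fun t ↦ (measurable_eker.comp measurable_prodMk_right).aestronglyMeasurable) ?_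
    (hτ.const_mul _) (.of_forall fun lam ↦ (continuous_eker lam).continuousAt)
  filter_upwards [Metric.ball_mem_nhds t₀ one_pos] with t ht
  refine .of_forall fun lam ↦ (norm_eker_le lam t).trans ?_
  have ht' : |t| ≤ |t₀| + 1 := by
    linarith [abs_sub_abs_le_abs_sub t t₀, mem_ball_iff_norm.1 ht, Real.norm_eq_abs (t - t₀)]
  gcongr ?_ * _
  rw [← sq_abs t]
  gcongr

theorem continuous_screwFn (α β : ℝ) : Continuous (screwFn τ α β) := by
  have := continuous_integral_eker hτ
  unfold screwFn
  fun_prop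

theorem integrable_exp_smul_eker {y : ℝ} (hy : 0 < y) :
    Integrable (Function.uncurry fun t lam ↦ Real.exp (-(y * t)) • eker lam t)
      ((volume.restrict (Ioi 0)).prod τ) := by
  have := sigmaFinite_of_integrable_of_ne_zero hτ fun lam ↦ by positivity
  have integrable_exp :
      IntegrableOn (fun t : ℝ ↦ Real.exp (-(y * t)) * (3 * t ^ 2 + 2)) (Ioi 0) := by
    refine (((integrableOn_exp_neg_mul_pow hy 2).const_mul 3).add
      ((integrableOn_exp_neg_mul_pow hy 0).const_mul 2)).congr (.of_forall fun t ↦ ?_)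
    simp only [Pi.add_apply]
    ring
  refine (integrable_exp.mul_prod hτ).mono' ?_ (.of_forall fun p ↦ ?_)
  · have measurable_exp : Measurable fun p : ℝ × ℝ ↦ Real.exp (-(y * p.1)) := by fun_prop
    exact (measurable_exp.smul (measurable_eker.comp measurable_swap)).aestronglyMeasurable
  · rw [Function.uncurry, norm_smul, Real.norm_of_nonneg (Real.exp_pos _).le, mul_assoc]
    gcongr
    exact norm_eker_le p.2 p.1

theorem hasLaplaceTransformAt_integral_eker {y : ℝ} (hy : 0 < y) :
    HasLaplaceTransformAt (fun t ↦ ∫ lam, eker lam t ∂τ) (-(Complex.I / y ^ 2) *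
      ∫ lam : ℝ, (1 / (lam - -(Complex.I * y)) - lam / (1 + (lam : ℂ) ^ 2)) ∂τ) y := by
  have := sigmaFinite_of_integrable_of_ne_zero hτ fun lam ↦ by positivity
  have integrable := integrable_exp_smul_eker hτ hy
  constructor
  · simp only [← integral_smul]
    exact integrable.integral_prod_left
  · simp only [laplaceTransform, ← integral_smul]
    rw [integral_integral_swap integrable, ← integral_const_mul]
    exact integral_congr_ae (.of_forall fun lam ↦ (hasLaplaceTransformAt_eker lam hy).eq)

theorem hasLaplaceTransformAt_screwFn (α β : ℝ) {y : ℝ} (hy : 0 < y) :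
    HasLaplaceTransformAt (screwFn τ α β)
      (-(Complex.I / y ^ 2) * herglotzFn τ α β (-(Complex.I * y))) y := by
  have hyc : (y : ℂ) ≠ 0 := Complex.ofReal_ne_zero.2 hy.ne'
  convert ((hasLaplaceTransformAt_integral_eker hτ hy).sub
    ((hasLaplaceTransformAt_pow hy 1).const_smul (Complex.I * α))).sub
    ((hasLaplaceTransformAt_pow hy 0).const_smul (β : ℂ)) using 1
  · funext t
    simp only [screwFn, smul_eq_mul, pow_one, pow_zero, mul_one]
  · simp only [herglotzFn, smul_eq_mul, Nat.factorial_one, Nat.factorial_zero, Nat.cast_one]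
    field_simp
    linear_combination ((β : ℂ) * y ^ 4) * Complex.I_sq

omit hτ in
theorem herglotzFn_neg_I_mul (τ : Measure ℝ) (α β y : ℝ) :
    herglotzFn τ α β (-(Complex.I * y)) = starRingEnd ℂ (herglotzFn τ α β (Complex.I * y)) := by
  rw [herglotzFn, herglotzFn, map_add, ← integral_conj]
  simp

omit hτ in
theorem norm_herglotz_kernel_le (lam : ℝ) {y : ℝ} (hy : 1 ≤ y) :
    ‖1 / ((lam : ℂ) - Complex.I * y) - lam / (1 + (lam : ℂ) ^ 2)‖ ≤ (1 + lam ^ 2)⁻¹ * y := by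
  have hden : (lam : ℂ) - Complex.I * y ≠ 0 := fun h ↦ by
    simpa [(zero_lt_one.trans_le hy).ne'] using congrArg Complex.im h
  have eq_div : 1 / ((lam : ℂ) - Complex.I * y) - lam / (1 + (lam : ℂ) ^ 2) =
      ((1 + lam ^ 2)⁻¹ : ℝ) * ((1 + Complex.I * (lam * y : ℝ)) / (lam - Complex.I * y)) := by
    have hne := one_add_sq_ne_zero lam
    push_cast
    field_simp
    ring
  have norm_num_le : ‖1 + Complex.I * (lam * y : ℝ)‖ ≤ y * ‖(lam : ℂ) - Complex.I * y‖ := by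
    refine le_of_sq_le_sq ?_ (by positivity)
    have hy2 : 1 ≤ y ^ 2 := one_le_pow₀ hy
    rw [mul_pow, Complex.sq_norm, Complex.sq_norm, Complex.normSq_apply, Complex.normSq_apply]
    simp only [Complex.add_re, Complex.add_im, Complex.sub_re, Complex.sub_im, Complex.one_re,
      Complex.one_im, Complex.I_mul_re, Complex.I_mul_im, Complex.ofReal_re, Complex.ofReal_im]
    nlinarith
  rw [eq_div, norm_mul, norm_div, Complex.norm_of_nonneg (by positivity)]
  gcongr
  exact (div_le_iff₀ (norm_pos_iff.2 hden)).2 norm_num_le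

theorem im_herglotzFn_I_mul_le (α β : ℝ) {y : ℝ} (hy : 1 ≤ y) :
    (herglotzFn τ α β (Complex.I * y)).im ≤ (β + ∫ lam : ℝ, (1 + lam ^ 2)⁻¹ ∂τ) * y := by
  have integral_le := (Complex.im_le_norm _).trans <| norm_integral_le_of_norm_le
    (hτ.mul_const y) (.of_forall fun lam ↦ norm_herglotz_kernel_le lam hy)
  rw [integral_mul_const] at integral_le
  simp only [herglotzFn, Complex.add_im, Complex.ofReal_im, Complex.mul_im, Complex.ofReal_re,
    Complex.I_re, Complex.I_im]
  linarith

end ScrewFunction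

section ScrewFunctionUniqueness
open Filter Asymptotics

variable {τ₁ τ₂ : Measure ℝ} {α₁ α₂ β₁ β₂ T : ℝ}

theorem eqOn_screwFn_of_isBigO (hτ₁ : Integrable (fun lam : ℝ ↦ (1 + lam ^ 2)⁻¹) τ₁)
    (hτ₂ : Integrable (fun lam : ℝ ↦ (1 + lam ^ 2)⁻¹) τ₂) (hT : 0 < T)
    (h : (fun y : ℝ ↦ herglotzFn τ₁ α₁ β₁ (Complex.I * y) - herglotzFn τ₂ α₂ β₂ (Complex.I * y))
      =O[atTop] fun y ↦ Real.exp (-(T * y))) :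
    EqOn (screwFn τ₁ α₁ β₁) (screwFn τ₂ α₂ β₂) (Icc 0 T) := by
  set F : ℝ → ℂ := fun t ↦ screwFn τ₁ α₁ β₁ t - screwFn τ₂ α₂ β₂ t
  have continuous_F : Continuous F :=
    (continuous_screwFn hτ₁ α₁ β₁).sub (continuous_screwFn hτ₂ α₂ β₂)
  have hasLaplace {y : ℝ} (hy : 0 < y) : HasLaplaceTransformAt F _ y :=
    (hasLaplaceTransformAt_screwFn hτ₁ α₁ β₁ hy).sub (hasLaplaceTransformAt_screwFn hτ₂ α₂ β₂ hy)
  have laplace_isBigO : laplaceTransform F =O[atTop] fun y ↦ Real.exp (-(T * y)) := by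
    refine IsBigO.trans (.of_bound 1 ?_) h
    filter_upwards [eventually_ge_atTop 1] with y hy
    rw [(hasLaplace (zero_lt_one.trans_le hy)).eq, ← mul_sub, herglotzFn_neg_I_mul,
      herglotzFn_neg_I_mul, ← map_sub, norm_mul, Complex.norm_conj, one_mul]
    refine mul_le_of_le_one_left (norm_nonneg _) ?_
    rw [norm_neg, norm_div, Complex.norm_I, norm_pow, Complex.norm_real,
      Real.norm_of_nonneg (by positivity)]
    exact div_le_one_of_le₀ (one_le_pow₀ hy) (by positivity)
  exact fun t ht ↦ sub_eq_zero.1 <| eqOn_zero_of_isBigO_laplaceTransform hT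
    continuous_F.continuousOn (hasLaplace one_pos).integrableOn laplace_isBigO ht

theorem eqOn_screwFn_of_forall_isBigO (hτ₁ : Integrable (fun lam : ℝ ↦ (1 + lam ^ 2)⁻¹) τ₁)
    (hτ₂ : Integrable (fun lam : ℝ ↦ (1 + lam ^ 2)⁻¹) τ₂) (hT : 0 < T)
    (h : ∀ S ∈ Ioo 0 T,
      (fun y : ℝ ↦ herglotzFn τ₁ α₁ β₁ (Complex.I * y) - herglotzFn τ₂ α₂ β₂ (Complex.I * y))
        =O[atTop] fun y ↦ Real.exp (-(S * y))) :
    EqOn (screwFn τ₁ α₁ β₁) (screwFn τ₂ α₂ β₂) (Icc 0 T) := by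
  have eqOn_Ioo : EqOn (screwFn τ₁ α₁ β₁) (screwFn τ₂ α₂ β₂) (Ioo 0 T) := fun t ht ↦
    eqOn_screwFn_of_isBigO hτ₁ hτ₂ ht.1 (h t ht) (right_mem_Icc.2 ht.1.le)
  exact closure_Ioo hT.ne ▸
    eqOn_Ioo.closure (continuous_screwFn hτ₁ α₁ β₁) (continuous_screwFn hτ₂ α₂ β₂)

theorem integral_eker_sub_of_eqOn_screwFn (hT : 0 ≤ T)
    (h : EqOn (screwFn τ₁ α₁ β₁) (screwFn τ₂ α₂ β₂) (Icc 0 T)) {t : ℝ} (ht : t ∈ Icc 0 T) :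
    (∫ lam, eker lam t ∂τ₁) - ∫ lam, eker lam t ∂τ₂ = Complex.I * (α₁ - α₂ : ℝ) * t := by
  have at_zero : (β₁ : ℂ) = β₂ := by
    simpa only [screwFn_zero, neg_inj] using h (left_mem_Icc.2 hT)
  have at_t := h ht
  rw [screwFn, screwFn, at_zero] at at_t
  push_cast
  linear_combination at_t

end ScrewFunctionUniqueness

namespace CanonicalSystem
open Filter Asymptotics

variable {H : ℝ → Matrix (Fin 2) (Fin 2) ℝ} {l : ℝ} {W : ℂ → ℝ → Matrix (Fin 2) (Fin 2) ℂ}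
  {τ : Measure ℝ}

theorem IsHamiltonian.of_inDom {ℓ : ENNReal} (hmeas : ∀ i j, Measurable fun x ↦ H x i j)
    (hpsd : ∀ᵐ x ∂volume.restrict {x | InDom ℓ x}, (H x).PosSemidef)
    (htr : ∀ᵐ x ∂volume.restrict {x | InDom ℓ x}, (H x).trace = 1)
    (hl : 0 ≤ l) (hlℓ : ENNReal.ofReal l < ℓ) : IsHamiltonian H l := by
  have Icc_subset : Icc 0 l ⊆ {x | InDom ℓ x} := fun x hx ↦
    ⟨hx.1, (ENNReal.ofReal_le_ofReal hx.2).trans_lt hlℓ⟩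
  exact .of_trace_eq_one hl (fun i j ↦ (hmeas i j).aestronglyMeasurable)
    (ae_restrict_of_ae_restrict_of_subset Icc_subset hpsd)
    (ae_restrict_of_ae_restrict_of_subset Icc_subset htr)

theorem integrable_of_isCanSpectralMeasure {Wl : ℂ → Matrix (Fin 2) (Fin 2) ℂ}
    (hτ : IsCanSpectralMeasure Wl τ) : Integrable (fun lam : ℝ ↦ (1 + lam ^ 2)⁻¹) τ := by
  simp only [← one_div]
  refine ⟨Measurable.aestronglyMeasurable (by fun_prop), ?_⟩
  exact (hasFiniteIntegral_iff_ofReal (.of_forall fun lam ↦ by positivity)).2 hτ.1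

theorem exists_herglotzFn_mem_weylDisc (hH : IsHamiltonian H l) (hl : 0 < exponentialType H l)
    (hW : IsFundamentalSolution l H W) (hτ : IsCanSpectralMeasure (fun z ↦ W z l) τ) :
    ∃ α β : ℝ, 0 ≤ β ∧
      ∀ z : ℂ, 0 < z.im → herglotzFn τ α β z ∈ weylDisc (W z l 0) (W z l 1) := by
  have flux_pos {z : ℂ} (hz : 0 < z.im) : 0 < flux (W z l 1) :=
    (IsFundamentalPair.of_isFundamentalSolution hH hW z).flux_snd_pos hH hz hl
  rcases hτ.2 with ⟨γ, hγ, α, β, hβ, h⟩ | ⟨α, β, hβ, h⟩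
  · refine ⟨α, β, hβ, fun z hz ↦ ?_⟩
    rw [← h z hz.ne']
    exact mobius_mem_weylDisc (flux_pos hz) (hγ.2.2 z hz)
  · refine ⟨α, β, hβ, fun z hz ↦ ?_⟩
    rw [← h z hz.ne']
    exact ratio_mem_weylDisc (flux_pos hz)

theorem exists_exponentialType_eq (hH : IsHamiltonian H l) {c : ℝ}
    (hc : c ∈ Icc 0 (exponentialType H l)) : ∃ x ∈ Icc 0 l, exponentialType H x = c := by
  have hc' : c ∈ Icc (exponentialType H 0) (exponentialType H l) := by
    rwa [exponentialType, intervalIntegral.integral_same]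
  exact intermediate_value_Icc hH.nonneg
    (uIcc_of_le hH.nonneg ▸ hH.isPrimitiveOn_exponentialType.continuousOn) hc'

theorem isBigO_sub_of_mem_weylDisc (hH : IsHamiltonian H l) (hW : IsFundamentalSolution l H W)
    {Q₁ Q₂ : ℝ → ℂ} {T K : ℝ} (hT : T ∈ Ico 0 (2 * exponentialType H l)) (hK₀ : 0 ≤ K)
    (hQ₁ : ∀ᶠ y : ℝ in atTop, Q₁ y ∈ weylDisc (W (Complex.I * y) l 0) (W (Complex.I * y) l 1))
    (hQ₂ : ∀ᶠ y : ℝ in atTop, Q₂ y ∈ weylDisc (W (Complex.I * y) l 0) (W (Complex.I * y) l 1))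
    (hK : ∀ᶠ y : ℝ in atTop, (Q₁ y).im ≤ K * y) :
    (fun y ↦ Q₁ y - Q₂ y) =O[atTop] fun y ↦ Real.exp (-(T * y)) := by
  obtain ⟨x, hx, hx_eq⟩ := exists_exponentialType_eq hH (c := exponentialType H l - T / 2)
    ⟨by linarith [hT.2], by linarith [hT.1]⟩
  have hx_pos : 0 < exponentialType H x := by linarith [hT.2]
  refine .of_bound (K / exponentialType H x ^ 2) ?_
  filter_upwards [hQ₁, hQ₂, hK, eventually_ge_atTop 1] with y hy₁ hy₂ hyK hy
  have him : (Complex.I * (y : ℂ)).im = y := by rw [Complex.I_mul_im, Complex.ofReal_re]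
  have bound := (IsFundamentalPair.of_isFundamentalSolution hH hW _).norm_sub_le_of_mem_weylDisc hH
    (by rw [him]; positivity) hx hy₁ hy₂ (by rwa [him]) hK₀
  rw [him, hx_eq, show 2 * y * (_ - (_ - T / 2)) = T * y by ring, ← hx_eq] at bound
  rw [Real.norm_of_nonneg (Real.exp_pos _).le, Real.exp_neg, ← div_eq_mul_inv, div_div,
    le_div_iff₀ (by positivity)]
  calc ‖Q₁ y - Q₂ y‖ * (exponentialType H x ^ 2 * Real.exp (T * y))
      ≤ y * (‖Q₁ y - Q₂ y‖ * (exponentialType H x ^ 2 * Real.exp (T * y))) :=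
        le_mul_of_one_le_left (by positivity) hy
    _ = y * exponentialType H x ^ 2 * Real.exp (T * y) * ‖Q₁ y - Q₂ y‖ := by ring
    _ ≤ K := bound

theorem isBigO_herglotzFn_sub (hH : IsHamiltonian H l) (hW : IsFundamentalSolution l H W)
    {τ₁ τ₂ : Measure ℝ} (hτ₁ : Integrable (fun lam : ℝ ↦ (1 + lam ^ 2)⁻¹) τ₁)
    {α₁ α₂ β₁ β₂ T : ℝ} (hβ₁ : 0 ≤ β₁)
    (h₁ : ∀ z : ℂ, 0 < z.im → herglotzFn τ₁ α₁ β₁ z ∈ weylDisc (W z l 0) (W z l 1))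
    (h₂ : ∀ z : ℂ, 0 < z.im → herglotzFn τ₂ α₂ β₂ z ∈ weylDisc (W z l 0) (W z l 1))
    (hT : T ∈ Ico 0 (2 * exponentialType H l)) :
    (fun y : ℝ ↦ herglotzFn τ₁ α₁ β₁ (Complex.I * y) - herglotzFn τ₂ α₂ β₂ (Complex.I * y))
      =O[atTop] fun y ↦ Real.exp (-(T * y)) := by
  have im_pos {y : ℝ} (hy : 0 < y) : 0 < (Complex.I * (y : ℂ)).im := by
    rwa [Complex.I_mul_im, Complex.ofReal_re]
  refine isBigO_sub_of_mem_weylDisc hH hW hT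
    (add_nonneg hβ₁ (integral_nonneg (f := fun lam : ℝ ↦ (1 + lam ^ 2)⁻¹) fun lam ↦ by positivity))
    ?_ ?_ ((eventually_ge_atTop 1).mono fun y hy ↦ im_herglotzFn_I_mul_le hτ₁ α₁ β₁ hy)
  · exact (eventually_gt_atTop 0).mono fun y hy ↦ h₁ _ (im_pos hy)
  · exact (eventually_gt_atTop 0).mono fun y hy ↦ h₂ _ (im_pos hy)

end CanonicalSystem

theorem screw_functions_coincide_up_to_linear_term_general
    {H : ℝ → Matrix (Fin 2) (Fin 2) ℝ} {l : ℝ} (hH : CanonicalSystem.IsHamiltonian H l)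
    (hal : 0 < ∫ x in (0 : ℝ)..l, Real.sqrt (H x).det)
    {W : ℂ → ℝ → Matrix (Fin 2) (Fin 2) ℂ} (hW : IsFundamentalSolution l H W)
    {τ₁ τ₂ : Measure ℝ} (hτ₁ : IsCanSpectralMeasure (fun z ↦ W z l) τ₁)
    (hτ₂ : IsCanSpectralMeasure (fun z ↦ W z l) τ₂) {β₁ β₂ : ℝ} {g₁ g₂ : ℝ → ℂ}
    (hg₁ : ∀ t : ℝ, g₁ t = Complex.I * β₁ * t + ∫ lam : ℝ, eker lam t ∂τ₁)
    (hg₂ : ∀ t : ℝ, g₂ t = Complex.I * β₂ * t + ∫ lam : ℝ, eker lam t ∂τ₂) :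
    ∃ β : ℝ, ∀ t ∈ Icc (0 : ℝ) (2 * ∫ x in (0 : ℝ)..l, Real.sqrt (H x).det),
      g₁ t - g₂ t = Complex.I * β * t := by
  have integrable₁ := CanonicalSystem.integrable_of_isCanSpectralMeasure hτ₁
  have integrable₂ := CanonicalSystem.integrable_of_isCanSpectralMeasure hτ₂
  obtain ⟨α₁, b₁, hb₁, disc₁⟩ := CanonicalSystem.exists_herglotzFn_mem_weylDisc hH hal hW hτ₁
  obtain ⟨α₂, b₂, -, disc₂⟩ := CanonicalSystem.exists_herglotzFn_mem_weylDisc hH hal hW hτ₂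
  have screw_eq := eqOn_screwFn_of_forall_isBigO integrable₁ integrable₂ (mul_pos two_pos hal)
    fun T hT ↦ CanonicalSystem.isBigO_herglotzFn_sub hH hW integrable₁ hb₁ disc₁ disc₂
      (Ioo_subset_Ico_self hT)
  refine ⟨β₁ - β₂ + (α₁ - α₂), fun t ht ↦ ?_⟩
  have integral_sub := integral_eker_sub_of_eqOn_screwFn (by positivity) screw_eq ht
  rw [hg₁, hg₂]
  push_cast at integral_sub ⊢
  linear_combination integral_sub

/-- **Coincidence of screw functions of a canonical system up to a linear term**
(Statement 4.1°). If `τ₁, τ₂` are spectral measures of the canonical system on `[0,l]`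
and `a(l) = ∫₀^l √(det H(x)) dx > 0`, then any two corresponding screw (transfer)
functions differ on `[0,2a(l)]` only by a term `iβt`. -/
theorem screw_functions_coincide_up_to_linear_term
    (ℓ : ENNReal) (hℓ : 0 < ℓ)
    (H : ℝ → Matrix (Fin 2) (Fin 2) ℝ)
    (hHmeas : ∀ i j : Fin 2, Measurable fun x => H x i j)
    (hHpsd : ∀ᵐ x ∂volume.restrict {x : ℝ | InDom ℓ x}, (H x).PosSemidef)
    (hHtr : ∀ᵐ x ∂volume.restrict {x : ℝ | InDom ℓ x}, Matrix.trace (H x) = 1)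
    (hH22 : ∀ x : ℝ, 0 < x → InDom ℓ x → 0 < ∫ s in (0:ℝ)..x, H s 1 1)
    (l : ℝ) (hl : 0 < l) (hlℓ : ENNReal.ofReal l < ℓ)
    (hal : 0 < ∫ x in (0:ℝ)..l, Real.sqrt (H x).det)
    (W : ℂ → ℝ → Matrix (Fin 2) (Fin 2) ℂ) (hW : IsFundamentalSolution l H W)
    (τ₁ τ₂ : Measure ℝ)
    (hτ₁ : IsCanSpectralMeasure (fun z => W z l) τ₁)
    (hτ₂ : IsCanSpectralMeasure (fun z => W z l) τ₂)
    (β₁ β₂ : ℝ) (g₁ g₂ : ℝ → ℂ)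
    (hg₁ : ∀ t : ℝ, g₁ t = Complex.I * β₁ * t + ∫ lam : ℝ, eker lam t ∂τ₁)
    (hg₂ : ∀ t : ℝ, g₂ t = Complex.I * β₂ * t + ∫ lam : ℝ, eker lam t ∂τ₂) :
    ∃ β : ℝ, ∀ t ∈ Icc (0:ℝ) (2 * ∫ x in (0:ℝ)..l, Real.sqrt (H x).det),
      g₁ t - g₂ t = Complex.I * β * t :=
  screw_functions_coincide_up_to_linear_term_general
    (.of_inDom hHmeas hHpsd hHtr hl.le hlℓ) hal hW hτ₁ hτ₂ hg₁ hg₂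
end

section
/- Closed form of the quadratic Fourier series in Example 3: For every λ₀ ∈ (−π/2, π/2] with λ₀ ≠ 0 and every x ∈ [−π, π]: ∑_{k∈ℤ} e^{2ikx}/(λ₀+kπ)² = e^{−2iλ₀x/π}·( (2/π)·(−|x| + i·x·cot λ₀) + 1/(sin λ₀)² ), the series converging absolutely. -/
open Complex

/-!
For `w = λ₀`, the right-hand side has the form `f y = e^{cy} (A y + B)` on `[0, π]`, where
`c = -2iw/π`. The constants are such that `f 0 = f π`, so `f` descends to a continuous function on
the circle `ℝ/πℤ`. In its `k`-th Fourier coefficient, an integral of `e^{dy} (A y + B)` with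
`d = -2i(w + kπ)/π`, the boundary terms of `e^{dy} (A y + B) / d` cancel for the same reason, and
those of `-e^{dy} A / d²` leave `1 / (w + kπ)²`. These coefficients are summable, hence the Fourier
series of `f` converges to `f` pointwise. Negative `x` reduce to positive ones through the symmetry
`(k, w, x) ↦ (-k, -w, -x)`.
-/

section

open Set
open scoped Real

lemma hasSum_fourierCoeffOn_of_summable {a b : ℝ} (hab : a < b) {f : ℝ → ℂ}
    (hf : ContinuousOn f (Icc a b)) (hends : f a = f b) (hsum : Summable (fourierCoeffOn hab f))
    {x : ℝ} (hx : x ∈ Icc a b) :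
    HasSum (fun n : ℤ => fourierCoeffOn hab f n * fourier n (x : AddCircle (b - a))) (f x) := by
  have : Fact (0 < b - a) := ⟨sub_pos.2 hab⟩
  have hb : a + (b - a) = b := add_sub_cancel a b
  let F : C(AddCircle (b - a), ℂ) :=
    ⟨AddCircle.liftIoc (b - a) a f, AddCircle.liftIoc_continuous (by rwa [hb]) (by rwa [hb])⟩
  have hF : F x = f x := by
    rcases hx.1.eq_or_lt with rfl | hax
    · change AddCircle.liftIoc (b - a) a f a = f a
      rw [← AddCircle.coe_add_period, AddCircle.liftIoc_coe_apply (by simp [hab]), hb, hends]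
    · exact AddCircle.liftIoc_coe_apply ⟨hax, by rw [hb]; exact hx.2⟩
  rw [← hF]
  exact has_pointwise_sum_fourier_series_of_summable (f := F) hsum x

lemma integral_exp_mul_affine {c : ℂ} (hc : c ≠ 0) (A B : ℂ) (a b : ℝ) :
    ∫ y in a..b, exp (c * y) * (A * y + B) =
      exp (c * b) * ((A * b + B) / c - A / c ^ 2) -
        exp (c * a) * ((A * a + B) / c - A / c ^ 2) := by
  have hderiv (z : ℂ) : HasDerivAt (fun z => exp (c * z) * ((A * z + B) / c - A / c ^ 2))
      (exp (c * z) * (A * z + B)) z := by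
    have hexp : HasDerivAt (fun z => exp (c * z)) (exp (c * z) * (c * 1)) z :=
      ((hasDerivAt_id z).const_mul c).cexp
    have haffine : HasDerivAt (fun z => (A * z + B) / c - A / c ^ 2) (A * 1 / c) z :=
      ((((hasDerivAt_id z).const_mul A).add_const B).div_const c).sub_const _
    refine (hexp.mul haffine).congr_deriv ?_
    field_simp
    ring
  exact intervalIntegral.integral_eq_sub_of_hasDerivAt (fun y _ => (hderiv y).comp_ofReal)
    (Continuous.intervalIntegrable (by fun_prop) _ _)

lemma fourierCoeffOn_exp_mul_affine {T : ℝ} (hT : 0 < T) {c A B : ℂ}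
    (hends : exp (c * T) * (A * T + B) = B) {n : ℤ} (hn : c * T ≠ n * (2 * π * I)) :
    fourierCoeffOn hT (fun y => exp (c * y) * (A * y + B)) n =
      A * T * (1 - exp (c * T)) / (c * T - n * (2 * π * I)) ^ 2 := by
  have hT' : (T : ℂ) ≠ 0 := ofReal_ne_zero.2 hT.ne'
  set d : ℂ := c - n * (2 * π * I) / T with hd
  have hdT : c * T - n * (2 * π * I) = d * T := by rw [hd]; field_simp
  have hd0 : d ≠ 0 := left_ne_zero_of_mul (hdT ▸ sub_ne_zero.2 hn)
  have hfourier (y : ℝ) : fourier (-n) (y : AddCircle (T - 0)) • (exp (c * y) * (A * y + B)) =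
      exp (d * y) * (A * y + B) := by
    rw [fourier_coe_apply, smul_eq_mul, ← mul_assoc, ← exp_add, hd]
    congr 2
    push_cast
    ring
  have hexp : exp (d * T) = exp (c * T) := by
    rw [← hdT, exp_sub, exp_int_mul_two_pi_mul_I, div_one]
  rw [fourierCoeffOn_eq_integral, intervalIntegral.integral_congr fun y _ => hfourier y,
    integral_exp_mul_affine hd0, hexp, hdT, real_smul]
  simp only [sub_zero, ofReal_div, ofReal_one, ofReal_zero, mul_zero, exp_zero, zero_add, one_mul]
  clear_value d
  generalize exp (c * T) = E at hends
  field_simp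
  linear_combination d * hends

lemma summable_one_div_add_int_mul_sq (w : ℂ) {p : ℂ} (hp : p ≠ 0) :
    Summable fun k : ℤ => 1 / (w + k * p) ^ 2 := by
  have h := (EisensteinSeries.linear_right_summable (w / p) 1 le_rfl).mul_left (1 / p ^ 2)
  refine h.congr fun k => ?_
  have hfactor : w + k * p = p * (((1 : ℤ) : ℂ) * (w / p) + k) := by
    push_cast
    field_simp
  rw [hfactor, mul_pow, one_div_mul_eq_div, one_div, mul_inv, inv_mul_eq_div, zpow_ofNat]

lemma one_sub_exp_neg_two_I_mul (w : ℂ) :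
    1 - exp (-2 * I * w) = 2 * I * sin w * exp (-(I * w)) := by
  have hsq : exp (-2 * I * w) = exp (-(I * w)) * exp (-(I * w)) := by
    rw [← exp_add]
    ring_nf
  have hinv : exp (I * w) * exp (-(I * w)) = 1 := by rw [← exp_add, add_neg_cancel, exp_zero]
  rw [sin, neg_mul w, mul_comm w I, hsq]
  linear_combination (1 - exp (-(I * w)) ^ 2) * I_sq + I ^ 2 * hinv

lemma neg_one_add_I_mul_cot {w : ℂ} (hw : sin w ≠ 0) :
    -1 + I * cot w = I * exp (I * w) / sin w := by
  rw [mul_comm I w, exp_mul_I, cot]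
  field_simp
  linear_combination -sin w * I_sq

lemma two_mul_neg_one_add_I_mul_cot_mul_one_sub_exp {w : ℂ} (hw : sin w ≠ 0) :
    2 * (-1 + I * cot w) * (1 - exp (-2 * I * w)) = -4 := by
  rw [one_sub_exp_neg_two_I_mul, neg_one_add_I_mul_cot hw, exp_neg]
  field_simp
  linear_combination 4 * I_sq

lemma exp_mul_two_mul_neg_one_add_I_mul_cot_add {w : ℂ} (hw : sin w ≠ 0) :
    exp (-2 * I * w) * (2 * (-1 + I * cot w) + 1 / sin w ^ 2) = 1 / sin w ^ 2 := by
  have hexp : exp (-2 * I * w) * exp (I * w) = exp (-(I * w)) := by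
    rw [← exp_add]
    ring_nf
  have hsub := one_sub_exp_neg_two_I_mul w
  rw [neg_one_add_I_mul_cot hw]
  generalize exp (-2 * I * w) = E at *
  field_simp
  linear_combination 2 * I * sin w * hexp - hsub

lemma add_int_mul_pi_ne_zero {w : ℂ} (hw : sin w ≠ 0) (k : ℤ) : w + k * π ≠ 0 := fun h =>
  hw (sin_eq_zero_iff.2 ⟨-k, by push_cast; linear_combination h⟩)

lemma hasSum_exp_div_add_int_mul_pi_sq {w : ℂ} (hw : sin w ≠ 0) {x : ℝ} (hx : x ∈ Icc 0 π) :
    HasSum (fun k : ℤ => exp (2 * I * k * x) / (w + k * π) ^ 2)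
      (exp (-2 * I * w * x / π) * (2 / π * (-x + I * x * cot w) + 1 / sin w ^ 2)) := by
  have hπ : (π : ℂ) ≠ 0 := ofReal_ne_zero.2 Real.pi_ne_zero
  set c : ℂ := -2 * I * w / π with hc
  set A : ℂ := 2 * (-1 + I * cot w) / π with hA
  set f : ℝ → ℂ := fun y => exp (c * y) * (A * y + 1 / sin w ^ 2) with hf
  have hcπ : c * π = -2 * I * w := div_mul_cancel₀ _ hπ
  have hAπ : A * π = 2 * (-1 + I * cot w) := div_mul_cancel₀ _ hπ
  have hends : exp (c * π) * (A * π + 1 / sin w ^ 2) = 1 / sin w ^ 2 := by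
    rw [hcπ, hAπ, exp_mul_two_mul_neg_one_add_I_mul_cot_add hw]
  have hcoeff (k : ℤ) : fourierCoeffOn Real.pi_pos f k = 1 / (w + k * π) ^ 2 := by
    have hfreq : c * π - k * (2 * π * I) = -2 * I * (w + k * π) := by rw [hcπ]; ring
    have hne := add_int_mul_pi_ne_zero hw k
    have hres : c * π ≠ k * (2 * π * I) := sub_ne_zero.1 (hfreq ▸ by simp [hne])
    rw [fourierCoeffOn_exp_mul_affine Real.pi_pos hends hres, hfreq, hcπ, hAπ,
      two_mul_neg_one_add_I_mul_cot_mul_one_sub_exp hw, mul_pow, mul_pow, I_sq]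
    field_simp
    norm_num
  have hsum := hasSum_fourierCoeffOn_of_summable Real.pi_pos (f := f) (by fun_prop)
    (by simpa [hf] using hends.symm)
    (by simpa only [funext hcoeff] using summable_one_div_add_int_mul_sq w hπ) hx
  convert hsum using 1
  · ext k
    rw [hcoeff, fourier_coe_apply, one_div_mul_eq_div]
    congr 2
    push_cast
    field_simp
    simp
  · simp only [hf, hc, hA]
    ring_nf

theorem example3_fourier_series_closed_form_general {w : ℂ} (hw : sin w ≠ 0) {x : ℝ}
    (hx : x ∈ Icc (-π) π) :
    HasSum (fun k : ℤ => exp (2 * I * k * x) / (w + k * π) ^ 2)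
      (exp (-2 * I * w * x / π) *
        (2 / π * (-(|x| : ℝ) + I * x * cot w) + 1 / sin w ^ 2)) := by
  rcases le_total 0 x with h0 | h0
  · rw [abs_of_nonneg h0]
    exact hasSum_exp_div_add_int_mul_pi_sq hw ⟨h0, hx.2⟩
  · have hneg := hasSum_exp_div_add_int_mul_pi_sq (w := -w) (x := -x) (by simpa using hw)
      ⟨neg_nonneg.2 h0, neg_le.1 hx.1⟩
    rw [← (Equiv.neg ℤ).hasSum_iff] at hneg
    rw [abs_of_nonpos h0]
    convert hneg using 1
    · ext k
      simp only [Function.comp, Equiv.neg_apply]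
      push_cast
      congr 1
      · ring_nf
      · ring
    · simp only [cot, sin_neg, cos_neg, ofReal_neg]
      ring_nf

end

/-- **Closed form of the quadratic Fourier series in Example 3.**
For `λ₀ ∈ (-π/2, π/2]`, `λ₀ ≠ 0`, and `x ∈ [-π, π]`:
`∑_{k∈ℤ} e^{2ikx}/(λ₀+kπ)² = e^{-2iλ₀x/π}((2/π)(-|x| + i x cot λ₀) + 1/sin²λ₀)`,
the series converging absolutely. -/
theorem example3_fourier_series_closed_form
    (lam₀ : ℝ) (hlam₀ : lam₀ ∈ Set.Ioc (-(Real.pi / 2)) (Real.pi / 2)) (hne : lam₀ ≠ 0)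
    (x : ℝ) (hx : x ∈ Set.Icc (-Real.pi) Real.pi) :
    Summable (fun k : ℤ =>
      Complex.exp (2 * Complex.I * k * x) / ((lam₀ : ℂ) + k * Real.pi) ^ 2) ∧
    ∑' k : ℤ, Complex.exp (2 * Complex.I * k * x) / ((lam₀ : ℂ) + k * Real.pi) ^ 2 =
      Complex.exp (-2 * Complex.I * lam₀ * x / Real.pi) *
        ((2 / Real.pi) * (-(|x| : ℝ) +
            Complex.I * x * (Real.cos lam₀ / Real.sin lam₀ : ℝ)) +
          1 / ((Real.sin lam₀ : ℂ)) ^ 2) := by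
  have hsin : Complex.sin lam₀ ≠ 0 := by
    rw [← Complex.ofReal_sin, Complex.ofReal_ne_zero, Ne, Real.sin_eq_zero_iff_of_lt_of_lt
      (by linarith [hlam₀.1, Real.pi_pos]) (by linarith [hlam₀.2, Real.pi_pos])]
    exact hne
  have hsum := example3_fourier_series_closed_form_general hsin hx
  rw [← Complex.ofReal_cot, Real.cot_eq_cos_div_sin, ← Complex.ofReal_sin] at hsum
  exact ⟨hsum.summable, hsum.tsum_eq⟩
end
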